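/- Let n ≥ 2, 1 < p < n, and set p* = np/(n−p), p' = p/(p−1), n' = n/(n−1). There is a constant c depending only on n and p such that for every weight w with [w]_{A_{p,p*}} < ∞ and every f ∈ C_c^∞(ℝⁿ), ‖w · M_{n'}f‖_{L^{p*}(ℝⁿ)} ≤ c · [w]_{A_{p,p*}}^{(1/n')·max{1, p'/p*}} · ‖w |∇f|‖_{L^{p}(ℝⁿ)}, where M_{n'}f = (M(|f|^{n'}))^{1/n'}. -/

import Mathlib

/-!
Everything takes place on `Fin n → ℝ` with the sup norm, whose closed balls are the axis-parallel
cubes. Put `q = p*`, `pp = p'` and `r = q / n'`, so that `w ∈ A_{p,q}` means `w^q ∈ A_r`, with the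
same constant `K`. The claim becomes a bound for `∫ M(|f|^{n'})^r w^q` by
`K^{max(r, r/(r-1))} (∫ (w |∇f|)^p)^{q/p}`.

At a point where `M_{n'} f` is comparable to `2^k`, rescale to `F = 2^{-k} f`. A smooth truncation
of `F` still has a large `L^{n'}` average on some ball, and the local `L¹` Sobolev inequality shows
(`exists_trunc_max`) that either the fractional maximal function `M1` of `|∇F|` or the maximal
function of `trunc ∘ F` is bounded below. In the second case the potential `J1` of the gradient of
`trunc ∘ F` is bounded below (`MC_le_J1`). Hence (`exists_pointwise`) `(M_{n'} f)^q` is dominated by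
`M1(|∇f|)^q` plus a sum over `k` of `2^{kq}` on level sets of `J1(|∇(trunc (2^{-k} f))|)`.

* The term with `M1` is reduced by Hölder's inequality to Buckley's sharp bound for the maximal
  function on `L^r(w^q)`, and costs `K^{r/(r-1)}` (`exists_M1_bound`). Buckley's bound is obtained by
  Lerner's argument: the maximal function is dominated pointwise by iterated maximal functions
  centred with respect to the weights, which are bounded uniformly in the measure by the
  Besicovitch covering theorem.
* Each level set is estimated by a weak type bound for `J1` with constant `K^r`
  (`exists_weak_J1`), which follows by duality from Hedberg's inequality and Buckley's bound for the
  dual weight. The gradients of the truncations live on disjoint level sets of `f` and `q ≥ p`, so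
  these weak bounds sum to a strong one (`exists_tsum_bound`).

Since `K ≥ 1`, both powers of `K` are at most `K^{max(r, r/(r-1))}`, and taking `q`-th roots gives
the exponent `(1/n') max(1, p'/p*)`. A weight with finite `A_{p,q}` constant either vanishes almost
everywhere, a trivial case, or is positive almost everywhere.
-/

open MeasureTheory ENNReal Filter Set

noncomputable section

/-- `ℝⁿ` with the Euclidean structure. -/
abbrev En (n : ℕ) := EuclideanSpace ℝ (Fin n)

/-- Axis-parallel closed cube with corner `a` and side length `h`. -/
def cube {n : ℕ} (a : En n) (h : ℝ) : Set (En n) := {y | ∀ i, a i ≤ y i ∧ y i ≤ a i + h}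

/-- Riesz potential of order `1` of a (nonnegative) function:
`I₁ g (x) = ∫ g(y) |x-y|^{-(n-1)} dy`. -/
def riesz (n : ℕ) (g : En n → ℝ) (x : En n) : ℝ≥0∞ :=
  ∫⁻ y, ENNReal.ofReal (g y) * ENNReal.ofReal (‖x - y‖ ^ (-((n : ℝ) - 1)))

/-- The quantity `(∫ g^p dμ)^{1/p}` for an `ℝ≥0∞`-valued function `g`. -/
def lpNorm {α : Type*} [MeasurableSpace α] (p : ℝ) (g : α → ℝ≥0∞) (μ : Measure α) : ℝ≥0∞ :=
  (∫⁻ x, g x ^ p ∂μ) ^ (1 / p)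

/-- Average `⨍_Q g` of an `ℝ≥0∞`-valued function over a set `Q`. -/
def avgE {n : ℕ} (g : En n → ℝ≥0∞) (Q : Set (En n)) : ℝ≥0∞ :=
  (volume Q)⁻¹ * ∫⁻ x in Q, g x

/-- The `A_{p,p*}` constant of a weight `w`; here `ps` plays the role of `p*` and
`pp` that of `p' = p/(p-1)`:
`[w]_{A_{p,p*}} = sup_Q (⨍_Q w^{p*}) (⨍_Q w^{-p'})^{p*/p'}`. -/
def Apq (n : ℕ) (ps pp : ℝ) (w : En n → ℝ) : ℝ≥0∞ :=
  ⨆ (a : En n) (h : ℝ) (_ : 0 < h),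
    avgE (fun x => ENNReal.ofReal (w x) ^ ps) (cube a h) *
      avgE (fun x => ENNReal.ofReal (w x) ^ (-pp)) (cube a h) ^ (ps / pp)

/-- The `A_{1,s}` constant of a weight `w`: the least `c` such that
`⨍_Q w^s ≤ c · essinf_Q w^s` for every cube `Q`. -/
def A1C (n : ℕ) (s : ℝ) (w : En n → ℝ) : ℝ≥0∞ :=
  sInf {c : ℝ≥0∞ | ∀ (a : En n) (h : ℝ), 0 < h →
    avgE (fun x => ENNReal.ofReal (w x) ^ s) (cube a h) ≤
      c * essInf (fun x => ENNReal.ofReal (w x) ^ s) (volume.restrict (cube a h))}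

/-- Hardy–Littlewood maximal operator over axis-parallel cubes containing `x`. -/
def maximal (n : ℕ) (g : En n → ℝ≥0∞) (x : En n) : ℝ≥0∞ :=
  ⨆ (a : En n) (h : ℝ) (_ : 0 < h) (_ : x ∈ cube a h), avgE g (cube a h)

/-- Weak `L^s` quasinorm `sup_{t>0} t · μ{|g|>t}^{1/s}` of a real function. -/
def wnormR {α : Type*} [MeasurableSpace α] (s : ℝ) (g : α → ℝ) (μ : Measure α) : ℝ≥0∞ :=
  ⨆ (t : ℝ) (_ : 0 < t), ENNReal.ofReal t * μ {x | t < |g x|} ^ (1 / s)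

section

/-! ### Dyadic sums -/

lemma dyadic_ub (a : ℝ≥0∞) {s : ℝ} (hs : 0 < s) :
    a ^ s ≤ ∑' k : ℤ, if (2 : ℝ≥0∞) ^ k < a then ((2 : ℝ≥0∞) ^ (k + 1)) ^ s else 0 := by
  rcases eq_or_ne a 0 with rfl | h0
  · simp [hs]
  rcases eq_or_ne a ∞ with rfl | ht
  · rw [ENNReal.top_rpow_of_pos hs]
    have h1 : ∀ k : ℕ, ((2 : ℝ≥0∞) ^ k) ^ s ≤ ∑' k : ℤ, if (2 : ℝ≥0∞) ^ k < ∞ then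
        ((2 : ℝ≥0∞) ^ (k + 1)) ^ s else 0 := by
      intro k
      refine le_trans ?_ (ENNReal.le_tsum ((k : ℤ) - 1))
      rw [if_pos (ENNReal.zpow_lt_top (by simp) (by simp) _)]
      simp
    refine top_le_iff.2 ?_
    by_contra hne
    set S := ∑' k : ℤ, if (2 : ℝ≥0∞) ^ k < ∞ then ((2 : ℝ≥0∞) ^ (k + 1)) ^ s else 0
    have h2 : Tendsto (fun k : ℕ => ((2 : ℝ≥0∞) ^ s) ^ k) atTop (nhds ∞) := by
      apply ENNReal.tendsto_pow_atTop_nhds_top_iff.2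
      exact ENNReal.one_lt_rpow (by simp) hs
    have h3 : (∞ : ℝ≥0∞) ≤ S := by
      refine le_of_tendsto' h2 fun k => ?_
      refine le_trans (le_of_eq ?_) (h1 k)
      rw [← ENNReal.rpow_natCast, ← ENNReal.rpow_mul, ← ENNReal.rpow_natCast, ← ENNReal.rpow_mul,
        mul_comm]
    exact hne (top_le_iff.1 h3)
  · obtain ⟨m, hm1, hm2⟩ := ENNReal.exists_mem_Ioc_zpow h0 ht (y := 2) (by simp) (by simp)
    refine le_trans ?_ (ENNReal.le_tsum m)
    rw [if_pos hm1]
    exact ENNReal.rpow_le_rpow hm2 hs.le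

/-- The constant `∑_{j ≥ 0} 2^{-jε}` of a geometric sum. -/
def geoC (ε : ℝ) : ℝ≥0∞ := ∑' j : ℕ, ((2 : ℝ≥0∞) ^ (-ε)) ^ j

lemma geoC_ne_top {ε : ℝ} (hε : 0 < ε) : geoC ε ≠ ∞ := by
  have h : (2 : ℝ≥0∞) ^ (-ε) < 1 := ENNReal.rpow_lt_one_of_one_lt_of_neg (by simp) (by linarith)
  rw [geoC, ENNReal.tsum_geometric]
  exact ENNReal.inv_ne_top.2 (tsub_pos_of_lt h).ne'

lemma geoC_ne_zero {ε : ℝ} : geoC ε ≠ 0 := by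
  have : (1 : ℝ≥0∞) ≤ geoC ε := by
    refine le_trans ?_ (ENNReal.le_tsum (f := fun j : ℕ => ((2 : ℝ≥0∞) ^ (-ε)) ^ j) 0)
    simp
  exact fun h => by simp [h] at this

lemma two_zpow_rpow (k : ℤ) (ε : ℝ) : ((2 : ℝ≥0∞) ^ k) ^ ε = (2 : ℝ≥0∞) ^ ((k : ℝ) * ε) := by
  rw [← ENNReal.rpow_intCast, ← ENNReal.rpow_mul]

lemma dyadic_lb (a : ℝ≥0∞) {ε : ℝ} (hε : 0 < ε) :
    (∑' k : ℤ, if (2 : ℝ≥0∞) ^ k < a then ((2 : ℝ≥0∞) ^ k) ^ ε else 0) ≤ geoC ε * a ^ ε := by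
  rcases eq_or_ne a 0 with rfl | h0
  · simp
  rcases eq_or_ne a ∞ with rfl | ht
  · rw [ENNReal.top_rpow_of_pos hε, ENNReal.mul_top geoC_ne_zero]
    exact le_top
  obtain ⟨m, hm1, hm2⟩ := ENNReal.exists_mem_Ioc_zpow h0 ht (y := 2) (by simp) (by simp)
  have hinj : Function.Injective (fun j : ℕ => m - (j : ℤ)) := by
    intro i j h; simpa using h
  have hsup : Function.support (fun k : ℤ => if (2 : ℝ≥0∞) ^ k < a then
      ((2 : ℝ≥0∞) ^ k) ^ ε else 0) ⊆ range (fun j : ℕ => m - (j : ℤ)) := by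
    intro k hk
    have hk' : (2 : ℝ≥0∞) ^ k < a := by
      by_contra h; simp [h] at hk
    have : (2 : ℝ≥0∞) ^ k < 2 ^ (m + 1) := hk'.trans_le hm2
    have hkm : k < m + 1 := by
      by_contra h
      exact absurd (ENNReal.zpow_le_of_le (x := 2) (by norm_num) (not_lt.1 h)) (not_le.2 this)
    exact ⟨(m - k).toNat, by simp; omega⟩
  rw [← hinj.tsum_eq hsup]
  calc _ ≤ ∑' j : ℕ, ((2 : ℝ≥0∞) ^ (-ε)) ^ j * ((2 : ℝ≥0∞) ^ m) ^ ε := by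
        refine ENNReal.tsum_le_tsum fun j => ?_
        split_ifs
        · apply le_of_eq
          rw [two_zpow_rpow, two_zpow_rpow, ← ENNReal.rpow_natCast, ← ENNReal.rpow_mul,
            ← ENNReal.rpow_add _ _ (by simp) (by simp)]
          congr 1; push_cast; ring
        · exact zero_le
    _ = geoC ε * ((2 : ℝ≥0∞) ^ m) ^ ε := by rw [ENNReal.tsum_mul_right, geoC]
    _ ≤ _ := by gcongr

lemma tsum_rpow_le {ι : Type*} (a : ι → ℝ≥0∞) {t : ℝ} (ht : 1 ≤ t) :
    ∑' i, a i ^ t ≤ (∑' i, a i) ^ t := by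
  have h : ∀ i, a i ^ t ≤ a i * (∑' i, a i) ^ (t - 1) := by
    intro i
    have : a i ^ t = a i ^ (1 : ℝ) * a i ^ (t - 1) := by
      rw [← ENNReal.rpow_add_of_nonneg _ _ (by norm_num) (by linarith)]; congr 1; ring
    rw [this, ENNReal.rpow_one]
    exact mul_le_mul_right (ENNReal.rpow_le_rpow (ENNReal.le_tsum i) (by linarith)) _
  refine (ENNReal.tsum_le_tsum h).trans (le_of_eq ?_)
  rw [ENNReal.tsum_mul_right]
  nth_rw 1 [← ENNReal.rpow_one (∑' i, a i)]
  rw [← ENNReal.rpow_add_of_nonneg _ _ (by norm_num) (by linarith)]; congr 1; ring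

/-! ### The centred maximal function of a measure -/

/-- Centred maximal function of `H` with respect to the measure `μ` on `ℝⁿ` with the sup norm,
over the closed balls (that is, cubes) of radius `2 ^ k`, `k ∈ ℤ`. The countable set of radii
makes the supremum measurable. -/
def MC {n : ℕ} (μ : Measure (Fin n → ℝ)) (H : (Fin n → ℝ) → ℝ≥0∞) (x : Fin n → ℝ) : ℝ≥0∞ :=
  ⨆ k : ℤ, (∫⁻ y in Metric.closedBall x ((2 : ℝ) ^ k), H y ∂μ) /
    μ (Metric.closedBall x ((2 : ℝ) ^ k))

variable {n : ℕ}

lemma measurable_lintegral_closedBall (μ : Measure (Fin n → ℝ)) [SFinite μ]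
    {H : (Fin n → ℝ) → ℝ≥0∞} (hH : Measurable H) (r : ℝ) :
    Measurable fun x => ∫⁻ y in Metric.closedBall x r, H y ∂μ := by
  have h : ∀ x, ∫⁻ y in Metric.closedBall x r, H y ∂μ =
      ∫⁻ y, ({z : (Fin n → ℝ) × (Fin n → ℝ) | dist z.2 z.1 ≤ r}.indicator (fun z => H z.2))
        (x, y) ∂μ := by
    intro x
    rw [← lintegral_indicator measurableSet_closedBall]
    rfl
  simp_rw [h]
  apply Measurable.lintegral_prod_right'
    (f := {z : (Fin n → ℝ) × (Fin n → ℝ) | dist z.2 z.1 ≤ r}.indicator (fun z => H z.2))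
  apply Measurable.indicator (by fun_prop)
  exact measurableSet_le (by fun_prop) (by fun_prop)

lemma measurable_MC (μ : Measure (Fin n → ℝ)) [SFinite μ]
    {H : (Fin n → ℝ) → ℝ≥0∞} (hH : Measurable H) : Measurable (MC μ H) := by
  unfold MC
  refine Measurable.iSup fun k => ?_
  refine (measurable_lintegral_closedBall μ hH _).div ?_
  simpa using measurable_lintegral_closedBall μ (measurable_const (a := (1 : ℝ≥0∞))) ((2:ℝ)^k)

/-- Weak `(1,1)` bound with a constant that does not depend on the measure: by Besicovitch, the
balls witnessing `MC μ H > l` can be thinned out to `N` disjoint families still covering the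
level set. -/
lemma exists_weak_MC (n : ℕ) : ∃ N : ℕ, ∀ (μ : Measure (Fin n → ℝ)) (H : (Fin n → ℝ) → ℝ≥0∞)
    (l : ℝ≥0∞), l * μ {x | l < MC μ H x} ≤ N * ∫⁻ y, H y ∂μ := by
  obtain ⟨N, τ, hτ, hN⟩ := HasBesicovitchCovering.no_satelliteConfig (α := Fin n → ℝ)
  refine ⟨N, fun μ H l => ?_⟩
  -- radii must be bounded for the covering theorem
  let E : ℕ → Set (Fin n → ℝ) := fun m => {x | ∃ k : ℤ, k ≤ m ∧
    l < (∫⁻ y in Metric.closedBall x ((2 : ℝ) ^ k), H y ∂μ) / μ (Metric.closedBall x ((2 : ℝ) ^ k))}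
  have hE : {x | l < MC μ H x} = ⋃ m, E m := by
    ext x
    simp only [mem_ofPred_eq, MC, lt_iSup_iff, mem_iUnion, E]
    constructor
    · rintro ⟨k, hk⟩
      exact ⟨k.toNat, k, by simp, hk⟩
    · rintro ⟨m, k, -, hk⟩
      exact ⟨k, hk⟩
  have hmono : Monotone E := by
    intro a b hab x hx
    obtain ⟨k, hk, h⟩ := hx
    exact ⟨k, hk.trans (by exact_mod_cast hab), h⟩
  rw [hE, hmono.measure_iUnion, ENNReal.mul_iSup]
  refine iSup_le fun m => ?_
  choose k hk hkl using fun x : E m => x.2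
  let q : Besicovitch.BallPackage (E m) (Fin n → ℝ) :=
    { c := fun x => x
      r := fun x => (2 : ℝ) ^ (k x)
      rpos := fun x => by positivity
      r_bound := (2 : ℝ) ^ (m : ℤ)
      r_le := fun x => zpow_le_zpow_right₀ (by norm_num) (hk x) }
  obtain ⟨s, hs, hcov⟩ := Besicovitch.exist_disjoint_covering_families hτ hN q
  have hcount : ∀ i, (s i).Countable := fun i =>
    (hs i).countable_of_nonempty_interior fun j _ => by
      have : (Metric.ball (q.c j) (q.r j)).Nonempty := Metric.nonempty_ball.2 (q.rpos j)
      exact this.mono Metric.ball_subset_interior_closedBall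
  have hsub : E m ⊆ ⋃ i : Fin N, ⋃ j ∈ s i, Metric.closedBall (q.c j) (q.r j) := by
    intro x hx
    have := hcov ⟨⟨x, hx⟩, rfl⟩
    simp only [mem_iUnion] at this ⊢
    obtain ⟨i, j, hj, hxj⟩ := this
    exact ⟨i, j, hj, Metric.ball_subset_closedBall hxj⟩
  have hi : ∀ i, l * μ (⋃ j ∈ s i, Metric.closedBall (q.c j) (q.r j)) ≤ ∫⁻ y, H y ∂μ := by
    intro i
    calc l * μ (⋃ j ∈ s i, Metric.closedBall (q.c j) (q.r j))
        ≤ l * ∑' j : s i, μ (Metric.closedBall (q.c j) (q.r j)) := by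
          gcongr; exact measure_biUnion_le μ (hcount i) _
      _ = ∑' j : s i, l * μ (Metric.closedBall (q.c j) (q.r j)) := ENNReal.tsum_mul_left.symm
      _ ≤ ∑' j : s i, ∫⁻ y in Metric.closedBall (q.c j) (q.r j), H y ∂μ :=
          ENNReal.tsum_le_tsum fun j => ENNReal.mul_le_of_le_div (hkl j).le
      _ = ∫⁻ y in ⋃ j ∈ s i, Metric.closedBall (q.c j) (q.r j), H y ∂μ :=
          (lintegral_biUnion (hcount i) (fun j _ => measurableSet_closedBall) (hs i) _).symm
      _ ≤ _ := setLIntegral_le_lintegral _ _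
  calc l * μ (E m) ≤ l * ∑ i : Fin N, μ (⋃ j ∈ s i, Metric.closedBall (q.c j) (q.r j)) := by
        gcongr
        exact (measure_mono hsub).trans (measure_iUnion_fintype_le _ _)
    _ = ∑ i : Fin N, l * μ (⋃ j ∈ s i, Metric.closedBall (q.c j) (q.r j)) := Finset.mul_sum _ _ _
    _ ≤ ∑ i : Fin N, ∫⁻ y, H y ∂μ := Finset.sum_le_sum fun i _ => hi i
    _ = _ := by simp

/-- Strong `(s,s)` bound, `s > 1`, again uniform in the measure (Marcinkiewicz interpolation
between `exists_weak_MC` and the trivial `L^∞` bound, on dyadic levels). -/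
lemma exists_strong_MC (n : ℕ) {s : ℝ} (hs : 1 < s) : ∃ C : ℝ≥0∞, C ≠ ∞ ∧
    ∀ (μ : Measure (Fin n → ℝ)) [SFinite μ] (H : (Fin n → ℝ) → ℝ≥0∞), Measurable H →
      ∫⁻ x, MC μ H x ^ s ∂μ ≤ C * ∫⁻ x, H x ^ s ∂μ := by
  obtain ⟨N, hN⟩ := exists_weak_MC n
  have hs0 : 0 < s := by linarith
  refine ⟨N * 4 ^ s * geoC (s - 1), ?_, fun μ _ H hH => ?_⟩
  · have := geoC_ne_top (ε := s - 1) (by linarith)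
    finiteness
  have hM := measurable_MC μ hH
  have hlev : ∀ k : ℤ, μ {x | (2 : ℝ≥0∞) ^ k < MC μ H x} ≤
      N * ((2 : ℝ≥0∞) ^ (k - 1))⁻¹ * ∫⁻ y, (if (2 : ℝ≥0∞) ^ (k - 1) < H y then H y else 0) ∂μ := by
    intro k
    set l : ℝ≥0∞ := (2 : ℝ≥0∞) ^ (k - 1) with hl
    have hl0 : l ≠ 0 := by
      rw [hl, ← ENNReal.rpow_intCast]; exact (ENNReal.rpow_pos (by simp) (by simp)).ne'
    have hlt : l ≠ ∞ := (ENNReal.zpow_lt_top (by simp) (by simp) _).ne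
    have h2l : (2 : ℝ≥0∞) ^ k = l + l := by
      rw [← two_mul, hl, ENNReal.zpow_sub (by simp) (by simp), zpow_one, ← div_eq_mul_inv,
        ENNReal.mul_div_cancel (by simp) (by simp)]
    set H' : (Fin n → ℝ) → ℝ≥0∞ := fun y => if l < H y then H y else 0
    have hsub : {x | (2 : ℝ≥0∞) ^ k < MC μ H x} ⊆ {x | l < MC μ H' x} := by
      intro x hx
      simp only [mem_ofPred_eq, MC, lt_iSup_iff] at hx ⊢
      obtain ⟨j, hj⟩ := hx
      refine ⟨j, ?_⟩
      set B := Metric.closedBall x ((2 : ℝ) ^ j)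
      have h1 : (∫⁻ y in B, H y ∂μ) ≤ (∫⁻ y in B, H' y ∂μ) + l * μ B := by
        rw [← setLIntegral_const, ← lintegral_add_right _ measurable_const]
        refine lintegral_mono fun y => ?_
        simp only [H']
        split_ifs with h
        · exact le_self_add
        · simpa using not_lt.1 h
      have h2 : (∫⁻ y in B, H y ∂μ) / μ B ≤ (∫⁻ y in B, H' y ∂μ) / μ B + l := by
        refine (ENNReal.div_le_div_right h1 _).trans ?_
        rw [ENNReal.add_div, mul_div_assoc]
        gcongr
        exact mul_le_of_le_one_right' ENNReal.div_self_le_one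
      rw [h2l] at hj
      exact lt_of_add_lt_add_right (hj.trans_le h2)
    have hw := hN μ H' l
    have : μ {x | l < MC μ H' x} ≤ l⁻¹ * (N * ∫⁻ y, H' y ∂μ) := by
      rw [← ENNReal.div_eq_inv_mul, ENNReal.le_div_iff_mul_le (.inl hl0) (.inl hlt), mul_comm]
      exact hw
    calc _ ≤ _ := (measure_mono hsub).trans this
      _ = _ := by ring
  calc ∫⁻ x, MC μ H x ^ s ∂μ
      ≤ ∫⁻ x, ∑' k : ℤ, (if (2 : ℝ≥0∞) ^ k < MC μ H x then ((2 : ℝ≥0∞) ^ (k + 1)) ^ s else 0) ∂μ :=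
        lintegral_mono fun x => dyadic_ub _ hs0
    _ = ∑' k : ℤ, ((2 : ℝ≥0∞) ^ (k + 1)) ^ s * μ {x | (2 : ℝ≥0∞) ^ k < MC μ H x} := by
        have hms : ∀ k : ℤ, MeasurableSet {x | (2 : ℝ≥0∞) ^ k < MC μ H x} := fun k =>
          measurableSet_lt measurable_const hM
        rw [lintegral_tsum fun k => (Measurable.ite (hms k) measurable_const
          measurable_const).aemeasurable]
        congr 1; ext k
        rw [← lintegral_indicator_const (hms k)]
        congr 1; ext x
        simp [indicator_apply]
    _ ≤ ∑' k : ℤ, N * 4 ^ s * ∫⁻ y, ((if (2 : ℝ≥0∞) ^ (k - 1) < H y then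
          ((2 : ℝ≥0∞) ^ (k - 1)) ^ (s - 1) else 0) * H y) ∂μ := by
        refine ENNReal.tsum_le_tsum fun k => ?_
        refine (mul_le_mul_right (hlev k) _).trans (le_of_eq ?_)
        have hms : Measurable fun y => (if (2 : ℝ≥0∞) ^ (k - 1) < H y then H y else 0) :=
          Measurable.ite (measurableSet_lt measurable_const hH) hH measurable_const
        have : ∀ y, (if (2 : ℝ≥0∞) ^ (k - 1) < H y then ((2 : ℝ≥0∞) ^ (k - 1)) ^ (s - 1) else 0)
            * H y = ((2 : ℝ≥0∞) ^ (k - 1)) ^ (s - 1) *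
              (if (2 : ℝ≥0∞) ^ (k - 1) < H y then H y else 0) := by
          intro y; split_ifs <;> simp
        simp_rw [this]
        rw [lintegral_const_mul _ hms, ← mul_assoc, ← mul_assoc, ← mul_assoc]
        congr 1
        have e4 : (4 : ℝ≥0∞) ^ s = (2 : ℝ≥0∞) ^ (2 * s) := by
          rw [ENNReal.rpow_mul]; norm_num
        rw [two_zpow_rpow, two_zpow_rpow, e4, ← ENNReal.rpow_intCast, ← ENNReal.rpow_neg,
          mul_comm _ (N : ℝ≥0∞), mul_assoc, mul_assoc, ← ENNReal.rpow_add _ _ (by simp) (by simp),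
          ← ENNReal.rpow_add _ _ (by simp) (by simp)]
        congr 2; push_cast; ring
    _ = N * 4 ^ s * ∫⁻ y, (∑' k : ℤ, (if (2 : ℝ≥0∞) ^ (k - 1) < H y then
          ((2 : ℝ≥0∞) ^ (k - 1)) ^ (s - 1) else 0)) * H y ∂μ := by
        rw [ENNReal.tsum_mul_left, ← lintegral_tsum]
        · simp_rw [ENNReal.tsum_mul_right]
        · intro k
          exact ((Measurable.ite (measurableSet_lt measurable_const hH) measurable_const
            measurable_const).mul hH).aemeasurable
    _ ≤ N * 4 ^ s * ∫⁻ y, geoC (s - 1) * H y ^ s ∂μ := by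
        refine mul_le_mul_right (lintegral_mono fun y => ?_) _
        have e := (Equiv.subRight (1 : ℤ)).tsum_eq (fun k : ℤ => if (2 : ℝ≥0∞) ^ k < H y then
          ((2 : ℝ≥0∞) ^ k) ^ (s - 1) else 0)
        simp only [Equiv.subRight_apply] at e
        simp only [e]
        refine (mul_le_mul_left (dyadic_lb (H y) (by linarith)) _).trans (le_of_eq ?_)
        rw [mul_assoc]
        congr 1
        nth_rw 2 [← ENNReal.rpow_one (H y)]
        rw [← ENNReal.rpow_add_of_nonneg _ _ (by linarith) (by norm_num)]; congr 1; ring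
    _ = _ := by
        rw [lintegral_const_mul _ (hH.pow_const s)]; ring

/-! ### Buckley's inequality -/

lemma vol_ball (x : Fin n → ℝ) {r : ℝ} (hr : 0 < r) :
    volume (Metric.closedBall x r) = ENNReal.ofReal ((2 * r) ^ n) := by
  rw [Real.volume_pi_closedBall _ hr.le, Fintype.card_fin]

lemma vol_ball_ne_zero (x : Fin n → ℝ) {r : ℝ} (hr : 0 < r) :
    volume (Metric.closedBall x r) ≠ 0 := by
  rw [vol_ball x hr]; simp; positivity

lemma vol_ball_ne_top (x : Fin n → ℝ) {r : ℝ} (hr : 0 < r) :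
    volume (Metric.closedBall x r) ≠ ∞ := by
  rw [vol_ball x hr]; simp

lemma vol_ball_mul (x y : Fin n → ℝ) {r c : ℝ} (hr : 0 < r) (hc : 0 < c) :
    volume (Metric.closedBall x (c * r)) =
      ENNReal.ofReal (c ^ n) * volume (Metric.closedBall y r) := by
  rw [vol_ball x (by positivity), vol_ball y hr, ← ENNReal.ofReal_mul (by positivity)]
  congr 1; ring

/-- The integral over a centred ball of dyadic radius, in terms of `MC`. -/
lemma lintegral_ball_le_MC (μ : Measure (Fin n → ℝ)) (H : (Fin n → ℝ) → ℝ≥0∞) (x : Fin n → ℝ)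
    (k : ℤ) (ht : μ (Metric.closedBall x ((2 : ℝ) ^ k)) ≠ ∞) :
    ∫⁻ y in Metric.closedBall x ((2 : ℝ) ^ k), H y ∂μ ≤
      MC μ H x * μ (Metric.closedBall x ((2 : ℝ) ^ k)) := by
  rcases eq_or_ne (μ (Metric.closedBall x ((2 : ℝ) ^ k))) 0 with h0 | h0
  · rw [setLIntegral_measure_zero _ _ h0]; simp
  · exact (ENNReal.div_le_iff h0 ht).1
      (le_iSup (fun k : ℤ => (∫⁻ y in Metric.closedBall x ((2 : ℝ) ^ k), H y ∂μ) /
        μ (Metric.closedBall x ((2 : ℝ) ^ k))) k)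

/-- Lerner's pointwise estimate behind Buckley's theorem: for `ν = a dx`, `μ = b dx` with joint
`A_s` constant `A`, the `(s-1)`-st power of the maximal function of `h b` is controlled by the
iterated weighted centred maximal functions. -/
lemma lerner_pointwise {s : ℝ} (hs : 1 < s) {a b : (Fin n → ℝ) → ℝ≥0∞}
    (ha : Measurable a) (hb : Measurable b) (ha0 : ∀ x, a x ≠ 0) (hat : ∀ x, a x ≠ ∞)
    {A : ℝ≥0∞}
    (hat' : ∀ x r, 0 < r → volume.withDensity a (Metric.closedBall x r) ≠ ∞)
    (hbt' : ∀ x r, 0 < r → volume.withDensity b (Metric.closedBall x r) ≠ ∞)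
    (hA : ∀ x r, 0 < r → volume.withDensity a (Metric.closedBall x r) *
      volume.withDensity b (Metric.closedBall x r) ^ (s - 1) ≤
        A * volume (Metric.closedBall x r) ^ s)
    {h : (Fin n → ℝ) → ℝ≥0∞} (hh : Measurable h) (x : Fin n → ℝ) :
    MC volume (fun y => h y * b y) x ≤ (ENNReal.ofReal (4 ^ n) ^ s * A *
      MC (volume.withDensity a) (fun y => MC (volume.withDensity b) h y ^ (s - 1) * (a y)⁻¹) x)
        ^ (1 / (s - 1)) := by
  set ν := volume.withDensity a with hν
  set μ := volume.withDensity b with hμ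
  set H := MC μ h with hH
  have hHm : Measurable H := measurable_MC μ hh
  set N := MC ν (fun y => H y ^ (s - 1) * (a y)⁻¹) x with hN
  have hs1 : 0 < s - 1 := by linarith
  unfold MC
  refine iSup_le fun k => ?_
  rw [one_div, ENNReal.le_rpow_inv_iff hs1]
  set Q := Metric.closedBall x ((2 : ℝ) ^ k) with hQ
  set Q2 := Metric.closedBall x ((4 : ℝ) * 2 ^ k) with hQ2
  have h2k : (0 : ℝ) < 2 ^ k := by positivity
  have hV0 : volume Q ≠ 0 := vol_ball_ne_zero x h2k
  have hVt : volume Q ≠ ∞ := vol_ball_ne_top x h2k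
  have hV2 : volume Q2 = ENNReal.ofReal (4 ^ n) * volume Q := vol_ball_mul x x h2k (by norm_num)
  have hI : ∫⁻ y in Q, h y * b y = ∫⁻ y in Q, h y ∂μ := by
    rw [hμ, restrict_withDensity measurableSet_closedBall,
      lintegral_withDensity_eq_lintegral_mul _ hb hh]
    simp [mul_comm, hQ]
  rw [hI]
  set I := ∫⁻ y in Q, h y ∂μ with hIdef
  have hy : ∀ y ∈ Q, I ≤ H y * μ Q2 := by
    intro y hyQ
    have hd : dist y x ≤ 2 ^ k := hyQ
    have e : (2 : ℝ) ^ (k + 1) = 2 * 2 ^ k := by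
      rw [zpow_add₀ (by norm_num)]; ring
    have s1 : Q ⊆ Metric.closedBall y ((2 : ℝ) ^ (k + 1)) := by
      apply Metric.closedBall_subset_closedBall'
      rw [e, dist_comm]; linarith
    have s2 : Metric.closedBall y ((2 : ℝ) ^ (k + 1)) ⊆ Q2 := by
      apply Metric.closedBall_subset_closedBall'
      rw [e]; linarith
    calc I ≤ ∫⁻ z in Metric.closedBall y ((2 : ℝ) ^ (k + 1)), h z ∂μ := lintegral_mono_set s1
      _ ≤ H y * μ (Metric.closedBall y ((2 : ℝ) ^ (k + 1))) :=
          lintegral_ball_le_MC μ h y (k + 1) (hbt' _ _ (by positivity))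
      _ ≤ H y * μ Q2 := by gcongr
  have key : volume Q * I ^ (s - 1) ≤ μ Q2 ^ (s - 1) * (N * ν Q2) := by
    calc volume Q * I ^ (s - 1) = ∫⁻ y in Q, I ^ (s - 1) := by
          rw [setLIntegral_const, mul_comm]
      _ ≤ ∫⁻ y in Q, μ Q2 ^ (s - 1) * H y ^ (s - 1) := by
          refine setLIntegral_mono' measurableSet_closedBall fun y hyQ => ?_
          rw [← ENNReal.mul_rpow_of_nonneg _ _ hs1.le, mul_comm]
          exact ENNReal.rpow_le_rpow (hy y hyQ) hs1.le
      _ = μ Q2 ^ (s - 1) * ∫⁻ y in Q, H y ^ (s - 1) :=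
          lintegral_const_mul _ (hHm.pow_const _)
      _ = μ Q2 ^ (s - 1) * ∫⁻ y in Q, H y ^ (s - 1) * (a y)⁻¹ ∂ν := by
          congr 1
          have hm : Measurable fun y => H y ^ (s - 1) * (a y)⁻¹ := (hHm.pow_const _).mul ha.inv
          rw [hν, restrict_withDensity measurableSet_closedBall,
            lintegral_withDensity_eq_lintegral_mul _ ha hm]
          refine lintegral_congr fun y => ?_
          simp only [Pi.mul_apply]
          rw [mul_comm, mul_assoc, ENNReal.inv_mul_cancel (ha0 y) (hat y), mul_one]
      _ ≤ μ Q2 ^ (s - 1) * (N * ν Q) := by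
          gcongr
          exact lintegral_ball_le_MC ν _ x k (hat' _ _ h2k)
      _ ≤ _ := by
          gcongr
          apply Metric.closedBall_subset_closedBall; linarith
  have key2 : volume Q * I ^ (s - 1) ≤
      (ENNReal.ofReal (4 ^ n) ^ s * A * N) * volume Q ^ s := by
    refine key.trans ?_
    calc _ = (ν Q2 * μ Q2 ^ (s - 1)) * N := by ring
      _ ≤ (A * volume Q2 ^ s) * N := mul_le_mul_left (hA _ _ (by positivity)) _
      _ = _ := by rw [hV2, ENNReal.mul_rpow_of_nonneg _ _ (by linarith)]; ring
  rw [ENNReal.div_rpow_of_nonneg _ _ hs1.le, ENNReal.div_le_iff (by simp [hV0, hVt])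
    (ENNReal.rpow_ne_top_of_nonneg hs1.le hVt)]
  rw [← ENNReal.mul_le_mul_iff_right hV0 hVt]
  refine key2.trans (le_of_eq ?_)
  have : volume Q ^ s = volume Q * volume Q ^ (s - 1) := by
    nth_rw 2 [← ENNReal.rpow_one (volume Q)]
    rw [← ENNReal.rpow_add _ _ hV0 hVt]; congr 1; ring
  rw [this]; ring

/-- Buckley's theorem: the maximal function is bounded on `L^s(a)` with operator norm at most a
constant times `A^{1/(s-1)}`, where `A` is the `A_s` constant of `a`. It is stated in the dual
form, for functions `h b` with `b = a^{-1/(s-1)}`. -/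
lemma exists_buckley (n : ℕ) {s : ℝ} (hs : 1 < s) : ∃ C : ℝ≥0∞, C ≠ ∞ ∧
    ∀ (a b : (Fin n → ℝ) → ℝ≥0∞) (A : ℝ≥0∞), Measurable a → Measurable b →
      (∀ x, a x ≠ 0) → (∀ x, a x ≠ ∞) → (∀ x, b x = a x ^ (-(1 / (s - 1)))) → A ≠ ∞ →
      (∀ x r, 0 < r → (∫⁻ y in Metric.closedBall x r, a y) *
        (∫⁻ y in Metric.closedBall x r, b y) ^ (s - 1) ≤
          A * volume (Metric.closedBall x r) ^ s) →
      ∀ h : (Fin n → ℝ) → ℝ≥0∞, Measurable h →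
        ∫⁻ x, MC volume (fun y => h y * b y) x ^ s * a x ≤
          C * A ^ (s / (s - 1)) * ∫⁻ x, h x ^ s * b x := by
  have hs1 : 0 < s - 1 := by linarith
  have hs' : 1 < s / (s - 1) := by rw [one_lt_div hs1]; linarith
  obtain ⟨C1, hC1, h1⟩ := exists_strong_MC n hs
  obtain ⟨C2, hC2, h2⟩ := exists_strong_MC n hs'
  refine ⟨(ENNReal.ofReal (4 ^ n) ^ s) ^ (s / (s - 1)) * C2 * C1, by finiteness, ?_⟩
  intro a b A ha hb ha0 hat hab hAt hA h hh
  have hb0 : ∀ x, b x ≠ 0 := fun x => by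
    rw [hab]; exact (ENNReal.rpow_pos (pos_iff_ne_zero.2 (ha0 x)) (hat x)).ne'
  set ν := volume.withDensity a with hν
  set μ := volume.withDensity b with hμ
  have hint : ∀ (c : (Fin n → ℝ) → ℝ≥0∞) (x : Fin n → ℝ) (r : ℝ),
      volume.withDensity c (Metric.closedBall x r) = ∫⁻ y in Metric.closedBall x r, c y :=
    fun c x r => withDensity_apply _ measurableSet_closedBall
  have hpos : ∀ (c : (Fin n → ℝ) → ℝ≥0∞), Measurable c → (∀ x, c x ≠ 0) → ∀ (x : Fin n → ℝ)
      (r : ℝ), 0 < r → (∫⁻ y in Metric.closedBall x r, c y) ≠ 0 := by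
    intro c hc hc0 x r hr h0
    rw [lintegral_eq_zero_iff hc] at h0
    have : ∀ᵐ y ∂(volume.restrict (Metric.closedBall x r)), False := by
      filter_upwards [h0] with y hy using hc0 y hy
    rw [ae_iff] at this
    simp at this
    exact vol_ball_ne_zero x hr this
  have hfin : ∀ (x : Fin n → ℝ) (r : ℝ), 0 < r →
      A * volume (Metric.closedBall x r) ^ s ≠ ∞ := fun x r hr =>
    ENNReal.mul_ne_top hAt (ENNReal.rpow_ne_top_of_nonneg (by linarith) (vol_ball_ne_top x hr))
  have hbt' : ∀ x r, 0 < r → μ (Metric.closedBall x r) ≠ ∞ := by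
    intro x r hr htop
    rw [hμ, hint] at htop
    have := hA x r hr
    rw [htop, ENNReal.top_rpow_of_pos hs1, ENNReal.mul_top (hpos a ha ha0 x r hr)] at this
    exact hfin x r hr (top_le_iff.1 this)
  have hat' : ∀ x r, 0 < r → ν (Metric.closedBall x r) ≠ ∞ := by
    intro x r hr htop
    rw [hν, hint] at htop
    have := hA x r hr
    rw [htop, ENNReal.top_mul] at this
    · exact hfin x r hr (top_le_iff.1 this)
    · have hb1 := hbt' x r hr
      rw [hμ, hint] at hb1
      exact (ENNReal.rpow_pos (pos_iff_ne_zero.2 (hpos b hb hb0 x r hr)) hb1).ne'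
  have hpt := lerner_pointwise hs ha hb ha0 hat (A := A) hat' hbt'
    (fun x r hr => by rw [hint, hint]; exact hA x r hr) hh
  rw [← hν, ← hμ] at hpt
  set H := MC μ h with hH
  have hHm : Measurable H := measurable_MC μ hh
  set N := MC ν (fun y => H y ^ (s - 1) * (a y)⁻¹) with hN
  have hNm : Measurable N := measurable_MC ν ((hHm.pow_const _).mul ha.inv)
  have hss : 0 ≤ s / (s - 1) := by linarith
  calc ∫⁻ x, MC volume (fun y => h y * b y) x ^ s * a x
      ≤ ∫⁻ x, (ENNReal.ofReal (4 ^ n) ^ s * A) ^ (s / (s - 1)) * (a x * N x ^ (s / (s - 1))) := by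
        refine lintegral_mono fun x => ?_
        refine (mul_le_mul_left (ENNReal.rpow_le_rpow (hpt x) (by linarith)) _).trans
          (le_of_eq ?_)
        rw [← ENNReal.rpow_mul, one_div_mul_eq_div, ENNReal.mul_rpow_of_nonneg _ _ hss]
        ring
    _ = (ENNReal.ofReal (4 ^ n) ^ s * A) ^ (s / (s - 1)) * ∫⁻ x, N x ^ (s / (s - 1)) ∂ν := by
        have hm : Measurable fun x => a x * N x ^ (s / (s - 1)) := ha.mul (hNm.pow_const _)
        rw [lintegral_const_mul _ hm, hν,
          lintegral_withDensity_eq_lintegral_mul _ ha (hNm.pow_const _)]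
        rfl
    _ ≤ (ENNReal.ofReal (4 ^ n) ^ s * A) ^ (s / (s - 1)) *
          (C2 * ∫⁻ x, (H x ^ (s - 1) * (a x)⁻¹) ^ (s / (s - 1)) ∂ν) := by
        gcongr
        exact h2 ν _ ((hHm.pow_const _).mul ha.inv)
    _ = (ENNReal.ofReal (4 ^ n) ^ s * A) ^ (s / (s - 1)) * (C2 * ∫⁻ x, H x ^ s ∂μ) := by
        congr 2
        have hm : Measurable fun x => (H x ^ (s - 1) * (a x)⁻¹) ^ (s / (s - 1)) :=
          ((hHm.pow_const _).mul ha.inv).pow_const _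
        rw [hν, hμ, lintegral_withDensity_eq_lintegral_mul _ ha hm,
          lintegral_withDensity_eq_lintegral_mul _ hb (hHm.pow_const _)]
        refine lintegral_congr fun x => ?_
        simp only [Pi.mul_apply]
        rw [ENNReal.mul_rpow_of_nonneg _ _ hss, ← ENNReal.rpow_mul, hab x,
          mul_div_cancel₀ _ hs1.ne', ← ENNReal.rpow_neg_one (a x), ← ENNReal.rpow_mul]
        nth_rw 1 [← ENNReal.rpow_one (a x)]
        rw [mul_left_comm, ← ENNReal.rpow_add _ _ (ha0 x) (hat x), mul_comm]
        congr 2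
        field_simp; ring
    _ ≤ (ENNReal.ofReal (4 ^ n) ^ s * A) ^ (s / (s - 1)) * (C2 * (C1 * ∫⁻ x, h x ^ s ∂μ)) := by
        gcongr
        exact h1 μ h hh
    _ = _ := by
        rw [ENNReal.mul_rpow_of_nonneg _ _ hss, hμ,
          lintegral_withDensity_eq_lintegral_mul _ hb (hh.pow_const _)]
        simp_rw [Pi.mul_apply, mul_comm (b _)]
        ring

/-! ### Exponents, weights, and the fractional maximal function -/

/-- The relations between the exponents: `1/p = 1/q + 1/n`, `1/p + 1/pp = 1`, `r = q/n'` and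
`q/pp = r - 1`. Here `q = p*`, `pp = p'`, and `w ∈ A_{p,q}` means `w^q ∈ A_r`. -/
structure Expo (n : ℕ) (p q pp r : ℝ) : Prop where
  hn : 2 ≤ n
  hp : 1 < p
  hpq : p ≤ q
  hpp : 1 < pp
  hr : 1 < r
  pq : 1 / p = 1 / q + 1 / n
  conj : 1 / p + 1 / pp = 1
  rq : r = q * ((n - 1) / n)
  qpp : q = pp * (r - 1)

/-- A measurable weight with values in `(0, ∞)` whose `A_{p,q}` constant, taken over sup norm
balls, is at most `K`. -/
structure Wt (n : ℕ) (q pp r : ℝ) (K : ℝ≥0∞) (w : (Fin n → ℝ) → ℝ≥0∞) : Prop where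
  meas : Measurable w
  ne_zero : ∀ x, w x ≠ 0
  ne_top : ∀ x, w x ≠ ∞
  K_ne_top : K ≠ ∞
  bound : ∀ x t, 0 < t → (∫⁻ y in Metric.closedBall x t, w y ^ q) *
    (∫⁻ y in Metric.closedBall x t, w y ^ (-pp)) ^ (r - 1) ≤
      K * volume (Metric.closedBall x t) ^ r

/-- Buckley's theorem on `L^r(w^q)`. -/
lemma exists_buckley_w {p q pp r : ℝ} (hE : Expo n p q pp r) : ∃ C : ℝ≥0∞, C ≠ ∞ ∧
    ∀ K w, Wt n q pp r K w → ∀ φ : (Fin n → ℝ) → ℝ≥0∞, Measurable φ →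
      ∫⁻ x, MC volume φ x ^ r * w x ^ q ≤ C * K ^ (r / (r - 1)) * ∫⁻ x, φ x ^ r * w x ^ q := by
  obtain ⟨C, hC, h⟩ := exists_buckley n hE.hr
  refine ⟨C, hC, fun K w hw φ hφ => ?_⟩
  have hr1 : r - 1 ≠ 0 := by have := hE.hr; intro h; linarith
  have hpw : ∀ x (c : ℝ), w x ^ c ≠ 0 := fun x c =>
    (ENNReal.rpow_pos (pos_iff_ne_zero.2 (hw.ne_zero x)) (hw.ne_top x)).ne'
  have hpt : ∀ x (c : ℝ), w x ^ c ≠ ∞ := fun x c => ENNReal.rpow_ne_top_of_ne_zero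
    (hw.ne_zero x) (hw.ne_top x)
  have := h (fun x => w x ^ q) (fun x => w x ^ (-pp)) K (hw.meas.pow_const _)
    (hw.meas.pow_const _) (fun x => hpw x _) (fun x => hpt x _) (fun x => by
      rw [← ENNReal.rpow_mul]; congr 1
      rw [hE.qpp]; field_simp) hw.K_ne_top hw.bound
    (fun x => φ x * w x ^ pp) (hφ.mul (hw.meas.pow_const _))
  have e1 : (fun y => φ y * w y ^ pp * w y ^ (-pp)) = φ := by
    ext y
    rw [mul_assoc, ← ENNReal.rpow_add _ _ (hw.ne_zero y) (hw.ne_top y)]; simp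
  have e2 : ∀ x, (φ x * w x ^ pp) ^ r * w x ^ (-pp) = φ x ^ r * w x ^ q := by
    intro x
    rw [ENNReal.mul_rpow_of_nonneg _ _ (by linarith [hE.hr]), mul_assoc, ← ENNReal.rpow_mul,
      ← ENNReal.rpow_add _ _ (hw.ne_zero x) (hw.ne_top x)]
    congr 2
    rw [hE.qpp]; ring
  rw [e1] at this
  simp_rw [e2] at this
  exact this

/-- Buckley's theorem for the dual weight: the maximal function is bounded on
`L^{r'}(w^{-pp})`, with operator norm at most a constant times `K`. -/
lemma exists_buckley_dual {p q pp r : ℝ} (hE : Expo n p q pp r) : ∃ C : ℝ≥0∞, C ≠ ∞ ∧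
    ∀ K w, Wt n q pp r K w → ∀ h : (Fin n → ℝ) → ℝ≥0∞, Measurable h →
      ∫⁻ x, MC volume (fun y => h y * w y ^ q) x ^ (r / (r - 1)) * w x ^ (-pp) ≤
        C * K ^ (r / (r - 1)) * ∫⁻ x, h x ^ (r / (r - 1)) * w x ^ q := by
  have hr := hE.hr
  have hr1 : 0 < r - 1 := by linarith
  have hs : 1 < r / (r - 1) := by rw [one_lt_div hr1]; linarith
  have es : r / (r - 1) - 1 = 1 / (r - 1) := by field_simp; ring
  obtain ⟨C, hC, h⟩ := exists_buckley n hs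
  refine ⟨C, hC, fun K w hw φ hφ => ?_⟩
  have hpw : ∀ x (c : ℝ), w x ^ c ≠ 0 := fun x c =>
    (ENNReal.rpow_pos (pos_iff_ne_zero.2 (hw.ne_zero x)) (hw.ne_top x)).ne'
  have hpt : ∀ x (c : ℝ), w x ^ c ≠ ∞ := fun x c => ENNReal.rpow_ne_top_of_ne_zero
    (hw.ne_zero x) (hw.ne_top x)
  have := h (fun x => w x ^ (-pp)) (fun x => w x ^ q) (K ^ (1 / (r - 1))) (hw.meas.pow_const _)
    (hw.meas.pow_const _) (fun x => hpw x _) (fun x => hpt x _) (fun x => by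
      rw [← ENNReal.rpow_mul, es]; congr 1
      rw [hE.qpp]; field_simp)
    (ENNReal.rpow_ne_top_of_nonneg (by positivity) hw.K_ne_top)
    (fun x t ht => by
      have hb := ENNReal.rpow_le_rpow (hw.bound x t ht) (z := 1 / (r - 1)) (by positivity)
      rw [ENNReal.mul_rpow_of_nonneg _ _ (by positivity),
        ENNReal.mul_rpow_of_nonneg _ _ (by positivity), ← ENNReal.rpow_mul, ← ENNReal.rpow_mul,
        mul_one_div_cancel hr1.ne', ENNReal.rpow_one, mul_one_div] at hb
      rw [es, mul_comm]
      exact hb) φ hφ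
  refine this.trans (le_of_eq ?_)
  rw [← ENNReal.rpow_mul, es]
  congr 3
  field_simp

/-- The fractional maximal function of order `1`, over centred balls of dyadic radius. -/
def M1 (G : (Fin n → ℝ) → ℝ≥0∞) (x : Fin n → ℝ) : ℝ≥0∞ :=
  ⨆ k : ℤ, ENNReal.ofReal ((2 : ℝ) ^ k) * ((∫⁻ y in Metric.closedBall x ((2 : ℝ) ^ k), G y) /
    volume (Metric.closedBall x ((2 : ℝ) ^ k)))

/-- Weighted bound for the fractional maximal function. Hölder's inequality with exponents `n'`
and `n` reduces it to Buckley's theorem on `L^r(w^q)`. -/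
lemma exists_M1_bound {p q pp r : ℝ} (hE : Expo n p q pp r) : ∃ C : ℝ≥0∞, C ≠ ∞ ∧
    ∀ K w, Wt n q pp r K w → ∀ G : (Fin n → ℝ) → ℝ≥0∞, Measurable G →
      ∫⁻ x, M1 G x ^ q * w x ^ q ≤
        C * K ^ (r / (r - 1)) * (∫⁻ x, (w x * G x) ^ p) ^ (q / p) := by
  obtain ⟨C, hC, hB⟩ := exists_buckley_w hE
  refine ⟨C, hC, fun K w hw G hG => ?_⟩
  have hp := hE.hp
  have hpq := hE.hpq
  have hr := hE.hr
  have hn : (2 : ℝ) ≤ n := by exact_mod_cast hE.hn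
  have hq0 : 0 < q := by linarith
  have hn0 : (0 : ℝ) < n := by linarith
  set φ : (Fin n → ℝ) → ℝ≥0∞ := fun x => G x ^ (p / r) * w x ^ ((p - q) / r) with hφd
  have hφ : Measurable φ := (hG.pow_const _).mul (hw.meas.pow_const _)
  set E := ∫⁻ x, (w x * G x) ^ p with hEd
  set θ : ℝ := (n - 1) / n with hθ
  have hθ0 : 0 < θ := div_pos (by linarith) hn0
  have hθ1 : θ + 1 / n = 1 := by rw [hθ]; field_simp; ring
  have hrq : r = q * θ := hE.rq
  have hpn : p / q + p / n = 1 := by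
    have := hE.pq
    field_simp at this ⊢
    linarith
  have hsplit : ∀ y, G y = φ y ^ θ * ((w y * G y) ^ p) ^ (1 / (n : ℝ)) := by
    intro y
    have e1 : p / r * θ = p / q := by rw [hrq]; field_simp
    have e2 : (p - q) / r * θ = p / q - 1 := by rw [hrq]; field_simp
    rw [hφd, ENNReal.mul_rpow_of_nonneg _ _ hθ0.le, ENNReal.mul_rpow_of_nonneg _ _ (by linarith),
      ENNReal.mul_rpow_of_nonneg _ _ (by positivity), ← ENNReal.rpow_mul, ← ENNReal.rpow_mul,
      ← ENNReal.rpow_mul, ← ENNReal.rpow_mul, e1, e2]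
    calc G y = G y ^ (p / q + p * (1 / n)) * w y ^ (p / q - 1 + p * (1 / n)) := by
          rw [mul_one_div, hpn, ENNReal.rpow_one,
            show p / q - 1 + p / n = 0 by linarith, ENNReal.rpow_zero, mul_one]
      _ = _ := by
          rw [ENNReal.rpow_add_of_nonneg _ _ (by positivity) (by positivity),
            ENNReal.rpow_add _ _ (hw.ne_zero y) (hw.ne_top y)]
          ring
  have hpt : ∀ x, M1 G x ≤ MC volume φ x ^ θ * E ^ (1 / (n : ℝ)) := by
    intro x
    refine iSup_le fun k => ?_
    set B := Metric.closedBall x ((2 : ℝ) ^ k) with hB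
    have h2k : (0 : ℝ) < 2 ^ k := by positivity
    have hV0 : volume B ≠ 0 := vol_ball_ne_zero x h2k
    have hVt : volume B ≠ ∞ := vol_ball_ne_top x h2k
    have hV : ENNReal.ofReal ((2 : ℝ) ^ k) ≤ volume B ^ (1 / (n : ℝ)) := by
      rw [one_div, ENNReal.le_rpow_inv_iff hn0, hB, vol_ball x h2k,
        ENNReal.ofReal_rpow_of_pos h2k, Real.rpow_natCast]
      apply ENNReal.ofReal_le_ofReal
      gcongr; linarith
    have hH : ∫⁻ y in B, G y ≤ (∫⁻ y in B, φ y) ^ θ * E ^ (1 / (n : ℝ)) := by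
      have hc : Real.HolderConjugate (1 / θ) n := by
        rw [Real.holderConjugate_iff]
        refine ⟨?_, by simpa using hθ1⟩
        rw [one_lt_div hθ0]
        have : 0 < 1 / (n : ℝ) := by positivity
        linarith
      calc ∫⁻ y in B, G y = ∫⁻ y in B, φ y ^ θ * ((w y * G y) ^ p) ^ (1 / (n : ℝ)) := by
            refine lintegral_congr fun y => hsplit y
        _ ≤ (∫⁻ y in B, (φ y ^ θ) ^ (1 / θ)) ^ (1 / (1 / θ)) *
            (∫⁻ y in B, (((w y * G y) ^ p) ^ (1 / (n : ℝ))) ^ (n : ℝ)) ^ (1 / (n : ℝ)) :=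
            ENNReal.lintegral_mul_le_Lp_mul_Lq _ hc (hφ.pow_const _).aemeasurable
              (((hw.meas.mul hG).pow_const _).pow_const _).aemeasurable
        _ ≤ _ := by
            simp_rw [← ENNReal.rpow_mul, mul_one_div_cancel hθ0.ne', one_div_one_div]
            have : p * (1 / (n : ℝ)) * n = p := by field_simp
            simp_rw [this, ENNReal.rpow_one]
            gcongr
            exact setLIntegral_le_lintegral _ _
    calc _ ≤ volume B ^ (1 / (n : ℝ)) * (((∫⁻ y in B, φ y) ^ θ * E ^ (1 / (n : ℝ))) / volume B) := by
          gcongr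
      _ = ((∫⁻ y in B, φ y) / volume B) ^ θ * E ^ (1 / (n : ℝ)) := by
          rw [ENNReal.div_rpow_of_nonneg _ _ hθ0.le, div_eq_mul_inv _ (volume B),
            div_eq_mul_inv _ (volume B ^ θ), ← ENNReal.rpow_neg, ← ENNReal.rpow_neg_one (volume B),
            show -θ = 1 / (n : ℝ) + -1 by linarith, ENNReal.rpow_add _ _ hV0 hVt]
          ring
      _ ≤ _ := by
          gcongr
          exact le_iSup (fun k : ℤ => (∫⁻ y in Metric.closedBall x ((2 : ℝ) ^ k), φ y) /
            volume (Metric.closedBall x ((2 : ℝ) ^ k))) k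
  have hφr : ∀ x, φ x ^ r * w x ^ q = (w x * G x) ^ p := by
    intro x
    rw [hφd, ENNReal.mul_rpow_of_nonneg _ _ (by linarith), ← ENNReal.rpow_mul, ← ENNReal.rpow_mul,
      mul_assoc, ← ENNReal.rpow_add _ _ (hw.ne_zero x) (hw.ne_top x),
      ENNReal.mul_rpow_of_nonneg _ _ (by linarith), div_mul_cancel₀ _ (by linarith),
      div_mul_cancel₀ _ (by linarith), mul_comm]
    congr 2; ring
  have hMm : Measurable (MC volume φ) := measurable_MC _ hφ
  calc ∫⁻ x, M1 G x ^ q * w x ^ q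
      ≤ ∫⁻ x, E ^ (q / n) * (MC volume φ x ^ r * w x ^ q) := by
        refine lintegral_mono fun x => ?_
        refine (mul_le_mul_left (ENNReal.rpow_le_rpow (hpt x) hq0.le) _).trans (le_of_eq ?_)
        rw [ENNReal.mul_rpow_of_nonneg _ _ hq0.le, ← ENNReal.rpow_mul, ← ENNReal.rpow_mul,
          mul_comm θ q, ← hrq, one_div_mul_eq_div]
        ring
    _ = E ^ (q / n) * ∫⁻ x, MC volume φ x ^ r * w x ^ q :=
        lintegral_const_mul _ ((hMm.pow_const _).mul (hw.meas.pow_const _))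
    _ ≤ E ^ (q / n) * (C * K ^ (r / (r - 1)) * E) := by
        gcongr
        refine (hB K w hw φ hφ).trans (le_of_eq ?_)
        simp_rw [hφr]; rfl
    _ = _ := by
        have : q / p = q / n + 1 := by
          have := hE.pq
          field_simp at this ⊢
          linarith
        rw [this, ENNReal.rpow_add_of_nonneg _ _ (by positivity) (by norm_num), ENNReal.rpow_one]
        ring

/-! ### A dyadic Riesz potential -/

/-- A dyadic version of the Riesz potential of order `1`: the supremum defining `M1` is replaced
by a sum. -/
def J1 (G : (Fin n → ℝ) → ℝ≥0∞) (x : Fin n → ℝ) : ℝ≥0∞ :=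
  ∑' k : ℤ, ENNReal.ofReal ((2 : ℝ) ^ k) * ((∫⁻ y in Metric.closedBall x ((2 : ℝ) ^ k), G y) /
    volume (Metric.closedBall x ((2 : ℝ) ^ k)))

lemma measurable_J1 {G : (Fin n → ℝ) → ℝ≥0∞} (hG : Measurable G) : Measurable (J1 G) := by
  unfold J1
  refine Measurable.tsum fun k => ?_
  refine Measurable.const_mul ?_ _
  refine (measurable_lintegral_closedBall volume hG _).div ?_
  simpa using measurable_lintegral_closedBall (n := n) volume
    (measurable_const (a := (1 : ℝ≥0∞))) ((2:ℝ)^k)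

lemma lintegral_mul_lintegral_ball {v G : (Fin n → ℝ) → ℝ≥0∞} (hv : Measurable v)
    (hG : Measurable G) (r : ℝ) :
    ∫⁻ x, v x * ∫⁻ y in Metric.closedBall x r, G y =
      ∫⁻ y, G y * ∫⁻ x in Metric.closedBall y r, v x := by
  set D : Set ((Fin n → ℝ) × (Fin n → ℝ)) := {z | dist z.2 z.1 ≤ r} with hD
  have hDm : MeasurableSet D := measurableSet_le (by fun_prop) measurable_const
  set F : (Fin n → ℝ) → (Fin n → ℝ) → ℝ≥0∞ :=
    fun x y => D.indicator (fun z => v z.1 * G z.2) (x, y) with hF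
  have h1 : ∀ x, v x * ∫⁻ y in Metric.closedBall x r, G y = ∫⁻ y, F x y := by
    intro x
    rw [← lintegral_const_mul _ hG, ← lintegral_indicator measurableSet_closedBall]
    rfl
  have h2 : ∀ y, G y * ∫⁻ x in Metric.closedBall y r, v x = ∫⁻ x, F x y := by
    intro y
    rw [← lintegral_const_mul _ hv, ← lintegral_indicator measurableSet_closedBall]
    refine lintegral_congr fun x => ?_
    simp only [hF, hD, indicator, mem_ofPred_eq, Metric.mem_closedBall, dist_comm x y, mul_comm]
  simp_rw [h1, h2]
  refine lintegral_lintegral_swap ?_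
  exact (Measurable.indicator (by fun_prop) hDm).aemeasurable

/-- The potential is a symmetric operator. -/
lemma lintegral_mul_J1 {v G : (Fin n → ℝ) → ℝ≥0∞} (hv : Measurable v) (hG : Measurable G) :
    ∫⁻ x, v x * J1 G x = ∫⁻ y, G y * J1 v y := by
  have key : ∀ {v G : (Fin n → ℝ) → ℝ≥0∞}, Measurable v → Measurable G →
      ∫⁻ x, v x * J1 G x = ∑' k : ℤ, ENNReal.ofReal ((2 : ℝ) ^ k) *
        (volume (Metric.closedBall (0 : Fin n → ℝ) ((2 : ℝ) ^ k)))⁻¹ *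
          ∫⁻ x, v x * ∫⁻ y in Metric.closedBall x ((2 : ℝ) ^ k), G y := by
    intro v G hv hG
    have hm : ∀ k : ℤ, Measurable fun x => v x * ∫⁻ y in Metric.closedBall x ((2 : ℝ) ^ k), G y :=
      fun k => hv.mul (measurable_lintegral_closedBall volume hG _)
    simp_rw [← lintegral_const_mul _ (hm _)]
    rw [← lintegral_tsum fun k => ((hm k).const_mul _).aemeasurable]
    refine lintegral_congr fun x => ?_
    rw [J1, ← ENNReal.tsum_mul_left]
    refine tsum_congr fun k => ?_
    rw [vol_ball x (by positivity), vol_ball 0 (by positivity), div_eq_mul_inv]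
    ring
  rw [key hv hG, key hG hv]
  simp_rw [lintegral_mul_lintegral_ball hv hG]

/-- Hedberg's inequality. -/
lemma exists_hedberg (n : ℕ) (hn : 2 ≤ n) : ∃ C : ℝ≥0∞, C ≠ ∞ ∧ ∀ (v : (Fin n → ℝ) → ℝ≥0∞) y,
    J1 v y ≤ C * (∫⁻ x, v x) ^ (1 / (n : ℝ)) * MC volume v y ^ (((n : ℝ) - 1) / n) := by
  have hn' : (2 : ℝ) ≤ n := by exact_mod_cast hn
  have hn1 : (0 : ℝ) < n - 1 := by linarith
  have hθ : (0 : ℝ) < (n - 1) / n := by positivity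
  refine ⟨geoC 1 + geoC (n - 1) * 2 ^ ((n : ℝ) - 1), ?_, fun v y => ?_⟩
  · have h1 := geoC_ne_top (ε := 1) (by norm_num)
    have h2 := geoC_ne_top hn1
    finiteness
  set V := ∫⁻ x, v x with hV
  set M := MC volume v y with hM
  set T : ℤ → ℝ≥0∞ := fun k => ENNReal.ofReal ((2 : ℝ) ^ k) *
    ((∫⁻ y in Metric.closedBall y ((2 : ℝ) ^ k), v y) /
      volume (Metric.closedBall y ((2 : ℝ) ^ k))) with hT
  have e2 : ∀ k : ℤ, ENNReal.ofReal ((2 : ℝ) ^ k) = (2 : ℝ≥0∞) ^ k := by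
    intro k
    rw [← Real.rpow_intCast, ← ENNReal.ofReal_rpow_of_pos (by norm_num), ENNReal.rpow_intCast]
    simp
  have hT1 : ∀ k, T k ≤ 2 ^ k * M := by
    intro k
    rw [← e2]
    exact mul_le_mul_right (le_iSup (fun k : ℤ => (∫⁻ z in Metric.closedBall y ((2 : ℝ) ^ k), v z) /
        volume (Metric.closedBall y ((2 : ℝ) ^ k))) k) _
  have hT2 : ∀ k, T k ≤ ((2 : ℝ≥0∞) ^ (-k)) ^ ((n : ℝ) - 1) * V := by
    intro k
    have hk0 : (2 : ℝ≥0∞) ^ k ≠ 0 := (ENNReal.zpow_pos (by simp) (by simp) _).ne'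
    have hkt : (2 : ℝ≥0∞) ^ k ≠ ∞ := (ENNReal.zpow_lt_top (by simp) (by simp) _).ne
    have hvol : ((2 : ℝ≥0∞) ^ k) ^ (n : ℝ) ≤ volume (Metric.closedBall y ((2 : ℝ) ^ k)) := by
      rw [vol_ball y (by positivity), ← e2, ENNReal.ofReal_rpow_of_pos (by positivity),
        Real.rpow_natCast]
      apply ENNReal.ofReal_le_ofReal
      have : (0 : ℝ) < 2 ^ k := by positivity
      gcongr; linarith
    calc T k ≤ 2 ^ k * (V / ((2 : ℝ≥0∞) ^ k) ^ (n : ℝ)) := by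
          rw [hT]; simp only [e2]
          gcongr
          exact setLIntegral_le_lintegral _ _
      _ = _ := by
          rw [ENNReal.zpow_neg, ← ENNReal.rpow_neg_one, ← ENNReal.rpow_mul, div_eq_mul_inv,
            ← ENNReal.rpow_neg, show -1 * ((n : ℝ) - 1) = 1 + -n by ring,
            ENNReal.rpow_add _ _ hk0 hkt, ENNReal.rpow_one]
          ring
  change ∑' k, T k ≤ _
  rcases eq_or_ne M 0 with hM0 | hM0
  · have : ∀ k, T k = 0 := fun k => le_antisymm ((hT1 k).trans (by simp [hM0])) bot_le
    simp [this]
  rcases eq_or_ne V 0 with hV0 | hV0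
  · have : ∀ k, T k = 0 := fun k => le_antisymm ((hT2 k).trans (by simp [hV0])) bot_le
    simp [this]
  have hC0 : geoC 1 + geoC (n - 1) * 2 ^ ((n : ℝ) - 1) ≠ 0 := by simp [geoC_ne_zero]
  rcases eq_or_ne M ∞ with hMt | hMt
  · rw [hMt, ENNReal.top_rpow_of_pos hθ, ENNReal.mul_top]
    · exact le_top
    · exact mul_ne_zero hC0 (by simp [hV0])
  rcases eq_or_ne V ∞ with hVt | hVt
  · rw [hVt, ENNReal.top_rpow_of_pos (by positivity), ENNReal.mul_top hC0, ENNReal.top_mul]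
    · exact le_top
    · exact (ENNReal.rpow_pos (pos_iff_ne_zero.2 hM0) hMt).ne'
  -- the two bounds on the `k`-th term balance at `2 ^ k = a`
  set a : ℝ≥0∞ := V ^ (1 / (n : ℝ)) * M ^ (-(1 / (n : ℝ))) with ha
  have hap : ∀ c : ℝ, a ^ c = V ^ (c / n) * M ^ (-(c / n)) := by
    intro c
    rw [ha, ENNReal.mul_rpow_of_ne_zero (by simp [hV0, hVt])
      (ENNReal.rpow_pos (pos_iff_ne_zero.2 hM0) hMt).ne', ← ENNReal.rpow_mul, ← ENNReal.rpow_mul]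
    congr 2 <;> ring
  have ha0 : a ≠ 0 := mul_ne_zero (by simp [hV0])
    (ENNReal.rpow_pos (pos_iff_ne_zero.2 hM0) hMt).ne'
  have hat : a ≠ ∞ := ENNReal.mul_ne_top (ENNReal.rpow_ne_top_of_nonneg (by positivity) hVt)
    (ENNReal.rpow_ne_top_of_ne_zero hM0 hMt)
  have hterm : ∀ k, T k ≤ (if (2 : ℝ≥0∞) ^ k < a then ((2 : ℝ≥0∞) ^ k) ^ (1 : ℝ) else 0) * M +
      (if (2 : ℝ≥0∞) ^ (-k) < 2 * a⁻¹ then ((2 : ℝ≥0∞) ^ (-k)) ^ ((n : ℝ) - 1) else 0) * V := by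
    intro k
    by_cases hk : (2 : ℝ≥0∞) ^ k < a
    · rw [if_pos hk, ENNReal.rpow_one]
      exact (hT1 k).trans le_self_add
    · rw [if_neg hk, if_pos]
      · simpa using hT2 k
      · rw [not_lt] at hk
        rw [ENNReal.zpow_neg]
        calc ((2 : ℝ≥0∞) ^ k)⁻¹ ≤ a⁻¹ := ENNReal.inv_le_inv.2 hk
          _ < 2 * a⁻¹ := by
            nth_rw 1 [← one_mul a⁻¹]
            exact ENNReal.mul_lt_mul_left (by simp [hat]) (by simp [ha0]) (by simp)
  calc ∑' k, T k ≤ _ := ENNReal.tsum_le_tsum hterm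
    _ = (∑' k : ℤ, if (2 : ℝ≥0∞) ^ k < a then ((2 : ℝ≥0∞) ^ k) ^ (1 : ℝ) else 0) * M +
        (∑' k : ℤ, if (2 : ℝ≥0∞) ^ k < 2 * a⁻¹ then ((2 : ℝ≥0∞) ^ k) ^ ((n : ℝ) - 1) else 0) * V := by
        rw [ENNReal.tsum_add, ENNReal.tsum_mul_right, ENNReal.tsum_mul_right]
        congr 2
        exact (Equiv.neg ℤ).tsum_eq (fun k : ℤ => if (2 : ℝ≥0∞) ^ k < 2 * a⁻¹ then
          ((2 : ℝ≥0∞) ^ k) ^ ((n : ℝ) - 1) else 0)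
    _ ≤ geoC 1 * a ^ (1 : ℝ) * M + geoC (n - 1) * (2 * a⁻¹) ^ ((n : ℝ) - 1) * V := by
        gcongr
        · exact dyadic_lb a (by norm_num)
        · exact dyadic_lb _ hn1
    _ = _ := by
        have i1 : a ^ (1 : ℝ) * M = V ^ (1 / (n : ℝ)) * M ^ (((n : ℝ) - 1) / n) := by
          rw [hap]
          nth_rw 2 [← ENNReal.rpow_one M]
          rw [mul_assoc, ← ENNReal.rpow_add _ _ hM0 hMt]
          congr 2; field_simp; ring
        have i2 : (2 * a⁻¹) ^ ((n : ℝ) - 1) * V =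
            2 ^ ((n : ℝ) - 1) * (V ^ (1 / (n : ℝ)) * M ^ (((n : ℝ) - 1) / n)) := by
          rw [ENNReal.mul_rpow_of_nonneg _ _ hn1.le, ← ENNReal.rpow_neg_one, ← ENNReal.rpow_mul,
            hap]
          nth_rw 2 [← ENNReal.rpow_one V]
          rw [mul_assoc, mul_right_comm, ← ENNReal.rpow_add _ _ hV0 hVt]
          · congr 3 <;> field_simp
            ring
        rw [mul_assoc, i1, mul_assoc (geoC _), i2]
        ring

/-! ### Weak type bound for the potential -/

lemma Wt.lintegral_ne_top {p q pp r : ℝ} (hE : Expo n p q pp r) {K : ℝ≥0∞}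
    {w : (Fin n → ℝ) → ℝ≥0∞} (hw : Wt n q pp r K w) (x : Fin n → ℝ) {t : ℝ} (ht : 0 < t) :
    ∫⁻ y in Metric.closedBall x t, w y ^ q ≠ ∞ := by
  have hr := hE.hr
  intro htop
  have hb := hw.bound x t ht
  rw [htop, ENNReal.top_mul] at hb
  · exact ENNReal.mul_ne_top hw.K_ne_top (ENNReal.rpow_ne_top_of_nonneg (by linarith)
      (vol_ball_ne_top x ht)) (top_le_iff.1 hb)
  · intro h0
    rw [ENNReal.rpow_eq_zero_iff_of_pos (by linarith),
      lintegral_eq_zero_iff (hw.meas.pow_const _)] at h0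
    have : ∀ᵐ y ∂(volume.restrict (Metric.closedBall x t)), False := by
      filter_upwards [h0] with y hy
      exact (ENNReal.rpow_pos (pos_iff_ne_zero.2 (hw.ne_zero y)) (hw.ne_top y)).ne' hy
    rw [ae_iff] at this
    simp at this
    exact vol_ball_ne_zero x ht this

/-- Weak type bound for the potential with the sharp power of the weight constant. By symmetry
and Hedberg's inequality, testing against `w^q` on the level set reduces it to Buckley's theorem
for the dual weight. -/
lemma exists_weak_J1 {p q pp r : ℝ} (hE : Expo n p q pp r) : ∃ C : ℝ≥0∞, C ≠ ∞ ∧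
    ∀ K w, Wt n q pp r K w → ∀ G : (Fin n → ℝ) → ℝ≥0∞, Measurable G → ∀ l : ℝ≥0∞,
      l ^ q * ∫⁻ x in {x | l < J1 G x}, w x ^ q ≤
        C * K ^ r * (∫⁻ x, (w x * G x) ^ p) ^ (q / p) := by
  obtain ⟨C1, hC1, h1⟩ := exists_hedberg n hE.hn
  obtain ⟨C2, hC2, h2⟩ := exists_buckley_dual hE
  have hp := hE.hp
  have hpq := hE.hpq
  have hpp := hE.hpp
  have hr := hE.hr
  have hn : (2 : ℝ) ≤ n := by exact_mod_cast hE.hn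
  have hq0 : 0 < q := by linarith
  have hn0 : (0 : ℝ) < n := by linarith
  have hr1 : 0 < r - 1 := by linarith
  refine ⟨(C1 * C2 ^ (1 / pp)) ^ q, by finiteness, fun K w hw G hG l => ?_⟩
  set E := ∫⁻ x, (w x * G x) ^ p with hEd
  set θ : ℝ := (n - 1) / n with hθ
  have hθ0 : 0 < θ := div_pos (by linarith) hn0
  have hrq : r = q * θ := hE.rq
  have hqpp := hE.qpp
  set μ : Measure (Fin n → ℝ) := volume.withDensity (fun x => w x ^ q) with hμ
  set S : Set (Fin n → ℝ) := {x | l < J1 G x} with hS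
  have hSm : MeasurableSet S := measurableSet_lt measurable_const (measurable_J1 hG)
  have key : ∀ N : ℕ, l ^ q * μ (S ∩ Metric.closedBall 0 N) ≤
      (C1 * C2 ^ (1 / pp)) ^ q * K ^ r * E ^ (q / p) := by
    intro N
    set U := S ∩ Metric.closedBall (0 : Fin n → ℝ) N with hU
    have hUm : MeasurableSet U := hSm.inter measurableSet_closedBall
    set h : (Fin n → ℝ) → ℝ≥0∞ := U.indicator 1 with hh
    have hhm : Measurable h := measurable_one.indicator hUm
    set v : (Fin n → ℝ) → ℝ≥0∞ := fun x => h x * w x ^ q with hv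
    have hvm : Measurable v := hhm.mul (hw.meas.pow_const _)
    have hvU : ∫⁻ x, v x = μ U := by
      rw [hμ, withDensity_apply _ hUm, ← lintegral_indicator hUm]
      refine lintegral_congr fun x => ?_
      by_cases hx : x ∈ U <;> simp [hv, hh, hx]
    set V := μ U with hV
    have hVt : V ≠ ∞ := by
      refine ne_top_of_le_ne_top (hw.lintegral_ne_top hE 0 (t := N + 1) (by positivity)) ?_
      rw [hV, hμ, withDensity_apply _ hUm]
      refine lintegral_mono_set (inter_subset_right.trans ?_)
      apply Metric.closedBall_subset_closedBall; linarith
    have hMm : Measurable (MC volume v) := measurable_MC _ hvm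
    have s1 : l * V ≤ ∫⁻ x, v x * J1 G x := by
      rw [← hvU, ← lintegral_const_mul _ hvm]
      refine lintegral_mono fun x => ?_
      by_cases hx : x ∈ U
      · rw [mul_comm]
        have : l < J1 G x := hx.1
        exact mul_le_mul_right this.le _
      · simp [hv, hh, hx]
    have s2 : ∫⁻ x, v x * J1 G x ≤
        C1 * V ^ (1 / (n : ℝ)) * ∫⁻ y, G y * MC volume v y ^ θ := by
      have hm : Measurable fun y => G y * MC volume v y ^ θ := hG.mul (hMm.pow_const _)
      rw [lintegral_mul_J1 hvm hG, ← lintegral_const_mul _ hm]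
      refine lintegral_mono fun y => ?_
      refine (mul_le_mul_right (h1 v y) _).trans (le_of_eq ?_)
      rw [hvU]; ring
    have s3 : ∫⁻ y, G y * MC volume v y ^ θ ≤
        E ^ (1 / p) * (∫⁻ y, MC volume v y ^ (r / (r - 1)) * w y ^ (-pp)) ^ (1 / pp) := by
      have hc : Real.HolderConjugate p pp := by
        rw [Real.holderConjugate_iff]
        exact ⟨hp, by simpa using hE.conj⟩
      calc ∫⁻ y, G y * MC volume v y ^ θ
          = ∫⁻ y, (w y * G y) * (MC volume v y ^ θ * (w y)⁻¹) := by
            refine lintegral_congr fun y => ?_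
            calc _ = (w y * (w y)⁻¹) * (G y * MC volume v y ^ θ) := by
                  rw [ENNReal.mul_inv_cancel (hw.ne_zero y) (hw.ne_top y), one_mul]
              _ = _ := by ring
        _ ≤ (∫⁻ y, (w y * G y) ^ p) ^ (1 / p) *
            (∫⁻ y, (MC volume v y ^ θ * (w y)⁻¹) ^ pp) ^ (1 / pp) :=
            ENNReal.lintegral_mul_le_Lp_mul_Lq _ hc (hw.meas.mul hG).aemeasurable
              ((hMm.pow_const _).mul hw.meas.inv).aemeasurable
        _ = _ := by
            congr 2
            refine lintegral_congr fun y => ?_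
            rw [ENNReal.mul_rpow_of_nonneg _ _ (by linarith), ← ENNReal.rpow_mul,
              ENNReal.inv_rpow, ← ENNReal.rpow_neg]
            congr 2
            have : r = pp * (r - 1) * θ := by rw [← hqpp]; exact hrq
            rw [eq_div_iff hr1.ne']; linarith
    have s4 : ∫⁻ y, MC volume v y ^ (r / (r - 1)) * w y ^ (-pp) ≤ C2 * K ^ (r / (r - 1)) * V := by
      refine (h2 K w hw h hhm).trans (le_of_eq ?_)
      rw [← hvU]
      congr 1
      refine lintegral_congr fun x => ?_
      by_cases hx : x ∈ U
      · simp [hv, hh, hx]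
      · have : 0 < r / (r - 1) := by positivity
        simp [hv, hh, hx, this]
    rcases eq_or_ne V 0 with hV0 | hV0
    · rw [hV0]; simp
    have s5 : l * V ≤ V ^ (1 / (n : ℝ) + 1 / pp) * (C1 * C2 ^ (1 / pp) * K ^ θ * E ^ (1 / p)) := by
      calc l * V ≤ C1 * V ^ (1 / (n : ℝ)) *
            (E ^ (1 / p) * (C2 * K ^ (r / (r - 1)) * V) ^ (1 / pp)) := by
            refine s1.trans (s2.trans (mul_le_mul_right (s3.trans (mul_le_mul_right ?_ _)) _))
            exact ENNReal.rpow_le_rpow s4 (by positivity)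
        _ = _ := by
            rw [ENNReal.mul_rpow_of_nonneg _ _ (by positivity),
              ENNReal.mul_rpow_of_nonneg _ _ (by positivity), ← ENNReal.rpow_mul,
              ENNReal.rpow_add _ _ hV0 hVt]
            have : r / (r - 1) * (1 / pp) = θ := by
              have : r = pp * (r - 1) * θ := by rw [← hqpp]; exact hrq
              field_simp
              linarith
            rw [this]
            ring
    have hexp : 1 / (n : ℝ) + 1 / pp + 1 / q = 1 := by linarith [hE.pq, hE.conj]
    have s6 : l * V ^ (1 / q) ≤ C1 * C2 ^ (1 / pp) * K ^ θ * E ^ (1 / p) := by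
      have hW0 : V ^ (1 / (n : ℝ) + 1 / pp) ≠ 0 := by
        exact (ENNReal.rpow_pos (pos_iff_ne_zero.2 hV0) hVt).ne'
      have hWt : V ^ (1 / (n : ℝ) + 1 / pp) ≠ ∞ := ENNReal.rpow_ne_top_of_ne_zero hV0 hVt
      rw [← ENNReal.mul_le_mul_iff_right hW0 hWt]
      refine le_trans (le_of_eq ?_) s5
      rw [mul_left_comm, ← ENNReal.rpow_add _ _ hV0 hVt, hexp, ENNReal.rpow_one]
    have s7 := ENNReal.rpow_le_rpow s6 hq0.le
    rw [ENNReal.mul_rpow_of_nonneg _ _ hq0.le, ENNReal.mul_rpow_of_nonneg _ _ hq0.le,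
      ENNReal.mul_rpow_of_nonneg _ _ hq0.le, ← ENNReal.rpow_mul, ← ENNReal.rpow_mul,
      ← ENNReal.rpow_mul, one_div_mul_cancel hq0.ne', ENNReal.rpow_one, mul_comm θ, ← hrq,
      one_div_mul_eq_div] at s7
    exact s7
  have hUn : S = ⋃ N : ℕ, S ∩ Metric.closedBall 0 N := by
    rw [← inter_iUnion, Metric.iUnion_closedBall_nat, inter_univ]
  have hmono : Monotone fun N : ℕ => S ∩ Metric.closedBall (0 : Fin n → ℝ) N := by
    intro a b hab
    refine inter_subset_inter_right _ (Metric.closedBall_subset_closedBall ?_)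
    exact_mod_cast hab
  rw [← withDensity_apply _ hSm, hUn, hmono.measure_iUnion, ENNReal.mul_iSup]
  exact iSup_le key

/-! ### Control of a function by the potential of its gradient -/

/-- Fundamental theorem of calculus along the ray from `z` in the direction `θ`. -/
lemma enorm_le_lintegral_ray {φ : (Fin n → ℝ) → ℝ} (hφ : ContDiff ℝ 1 φ)
    (hs : HasCompactSupport φ) (z : Fin n → ℝ) {θ : Fin n → ℝ} (h0 : θ ≠ 0) (h1 : ‖θ‖ ≤ 1) :
    ‖φ z‖ₑ ≤ ∫⁻ t in Ioi (0 : ℝ), ‖fderiv ℝ φ (z + t • θ)‖ₑ := by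
  set g : ℝ → ℝ := fun t => φ (z + (-t) • θ) with hg
  have hcd : ContDiff ℝ 1 g := hφ.comp (by fun_prop)
  have hsg : HasCompactSupport g := by
    have hemb : Topology.IsClosedEmbedding fun t : ℝ => z + (-t) • θ := by
      have h2 := (Homeomorph.addLeft z).isClosedEmbedding.comp
        ((isClosedEmbedding_smul_left (𝕜 := ℝ) h0).comp (Homeomorph.neg ℝ).isClosedEmbedding)
      exact h2
    exact hs.comp_isClosedEmbedding hemb
  have hd : ∀ t, ‖deriv g t‖ₑ ≤ ‖fderiv ℝ φ (z + (-t) • θ)‖ₑ := by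
    intro t
    have hda : HasDerivAt g (fderiv ℝ φ (z + (-t) • θ) (-θ)) t := by
      have hl : HasDerivAt (fun t : ℝ => z + (-t) • θ) (-θ) t := by
        have := ((hasDerivAt_id t).neg.smul_const θ).const_add z
        simpa using this
      exact ((hφ.differentiable (by norm_num)) _).hasFDerivAt.comp_hasDerivAt t hl
    rw [hda.deriv]
    refine (ContinuousLinearMap.le_opENorm _ _).trans ?_
    have : ‖-θ‖ₑ ≤ 1 := by
      rw [enorm_neg, ← ofReal_norm]; exact ENNReal.ofReal_le_one.2 h1
    calc _ ≤ ‖fderiv ℝ φ (z + (-t) • θ)‖ₑ * 1 := mul_le_mul_right this _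
      _ = _ := mul_one _
  have hmain := hsg.enorm_le_lintegral_Ici_deriv hcd 0
  have e0 : g 0 = φ z := by simp [hg]
  rw [e0] at hmain
  refine hmain.trans ((lintegral_mono hd).trans (le_of_eq ?_))
  have hmp : MeasurePreserving (fun t : ℝ => -t) (volume.restrict (Iic 0))
      (volume.restrict (Ici 0)) := by
    have := (Measure.measurePreserving_neg (volume : Measure ℝ)).restrict_preimage
      (measurableSet_Ici (a := (0 : ℝ)))
    simpa using this
  rw [restrict_Ioi_eq_restrict_Ici, ← hmp.lintegral_comp_emb (MeasurableEquiv.neg ℝ).measurableEmbedding]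

lemma lintegral_unit_ball_comp {G : (Fin n → ℝ) → ℝ≥0∞} (hG : Measurable G) (z : Fin n → ℝ)
    {t : ℝ} (ht : 0 < t) :
    ∫⁻ θ in Metric.closedBall (0 : Fin n → ℝ) 1, G (z + t • θ) =
      ENNReal.ofReal ((t ^ n)⁻¹) * ∫⁻ y in Metric.closedBall z t, G y := by
  set g := (Metric.closedBall z t).indicator G with hg
  have hgm : Measurable g := hG.indicator measurableSet_closedBall
  have e1 : ∫⁻ θ in Metric.closedBall (0 : Fin n → ℝ) 1, G (z + t • θ) =
      ∫⁻ θ, g (z + t • θ) := by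
    rw [← lintegral_indicator measurableSet_closedBall]
    refine lintegral_congr fun θ => ?_
    have : z + t • θ ∈ Metric.closedBall z t ↔ θ ∈ Metric.closedBall (0 : Fin n → ℝ) 1 := by
      rw [mem_closedBall_iff_norm, mem_closedBall_iff_norm, add_sub_cancel_left, norm_smul,
        Real.norm_of_nonneg ht.le, sub_zero, mul_le_iff_le_one_right ht]
    by_cases h : θ ∈ Metric.closedBall (0 : Fin n → ℝ) 1
    · rw [hg, indicator_of_mem h, indicator_of_mem (this.2 h)]
    · rw [hg, indicator_of_notMem h, indicator_of_notMem (fun h' => h (this.1 h'))]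
  have e2 := Measure.map_addHaar_smul (volume : Measure (Fin n → ℝ)) ht.ne'
  have e3 : ∫⁻ θ, g (z + t • θ) = ∫⁻ y, g (z + y) ∂(Measure.map (t • ·) volume) :=
    (lintegral_map (f := fun y => g (z + y)) (by fun_prop) (by fun_prop)).symm
  rw [e1, e3, e2, lintegral_smul_measure, lintegral_add_left_eq_self g z, hg,
    lintegral_indicator measurableSet_closedBall, Module.finrank_fin_fun,
    abs_of_pos (by positivity), smul_eq_mul]

set_option maxHeartbeats 1000000 in
/-- A maximal function of a compactly supported function is dominated by the potential of its
gradient. The fundamental theorem of calculus along a ray is averaged over the directions and over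
the ball; distances along the ray below the radius of the ball cost one dyadic term of the
potential, larger ones cost the remaining terms. -/
lemma MC_le_J1 (hn : 0 < n) {φ : (Fin n → ℝ) → ℝ} (hφ : ContDiff ℝ 1 φ)
    (hs : HasCompactSupport φ) (x : Fin n → ℝ) :
    MC volume (fun y => ‖φ y‖ₑ) x ≤
      2 * ENNReal.ofReal (4 ^ n) * J1 (fun y => ‖fderiv ℝ φ y‖ₑ) x := by
  have : Nonempty (Fin n) := ⟨⟨0, hn⟩⟩
  set G : (Fin n → ℝ) → ℝ≥0∞ := fun y => ‖fderiv ℝ φ y‖ₑ with hGd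
  have hGc : Continuous G := (hφ.continuous_fderiv (by norm_num)).enorm
  have hG : Measurable G := hGc.measurable
  set T : ℤ → ℝ≥0∞ := fun k => ENNReal.ofReal ((2 : ℝ) ^ k) *
    ((∫⁻ y in Metric.closedBall x ((2 : ℝ) ^ k), G y) /
      volume (Metric.closedBall x ((2 : ℝ) ^ k))) with hT
  have hJ : J1 G x = ∑' k, T k := rfl
  refine iSup_le fun m => ?_
  set h : ℝ := (2 : ℝ) ^ m with hh
  have hpos : 0 < h := by positivity
  set B := Metric.closedBall x h with hB
  set Θ := Metric.closedBall (0 : Fin n → ℝ) 1 with hΘ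
  have hV0 : volume B ≠ 0 := vol_ball_ne_zero x hpos
  have hVt : volume B ≠ ∞ := vol_ball_ne_top x hpos
  have hΘ0 : volume Θ ≠ 0 := vol_ball_ne_zero _ one_pos
  have hΘt : volume Θ ≠ ∞ := vol_ball_ne_top _ one_pos
  have hΘv : volume Θ = ENNReal.ofReal (2 ^ n) := by rw [hΘ, vol_ball _ one_pos]; norm_num
  set I : Set ℝ → ℝ≥0∞ := fun A => ∫⁻ z in B, ∫⁻ θ in Θ, ∫⁻ t in A, G (z + t • θ) with hI
  -- the averaged fundamental theorem of calculus
  have a1 : volume Θ * ∫⁻ z in B, ‖φ z‖ₑ ≤ I (Ioi 0) := by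
    rw [hI, ← lintegral_const_mul _ hφ.continuous.measurable.enorm]
    refine lintegral_mono fun z => ?_
    rw [mul_comm, ← setLIntegral_const]
    refine lintegral_mono_ae ?_
    have hne : ∀ᵐ θ ∂(volume.restrict Θ), θ ≠ 0 := by
      refine ae_restrict_of_ae ?_
      rw [ae_iff]; simp
    filter_upwards [hne, ae_restrict_mem measurableSet_closedBall] with θ h0 hθ
    exact enorm_le_lintegral_ray hφ hs z h0 (by simpa [hΘ] using hθ)
  have a2 : I (Ioi 0) ≤ I (Ioc 0 h) + ∑' j : ℕ, I (Ico (2 ^ j * h) (2 ^ (j + 1) * h)) := by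
    have hcov : Ioi (0 : ℝ) ⊆ Ioc 0 h ∪ ⋃ j : ℕ, Ico (2 ^ j * h) (2 ^ (j + 1) * h) := by
      intro t ht
      rcases le_or_gt t h with hth | hth
      · exact Or.inl ⟨ht, hth⟩
      · right
        have : 1 ≤ t / h := by rw [one_le_div hpos]; exact hth.le
        obtain ⟨j, hj1, hj2⟩ := exists_nat_pow_near this (one_lt_two)
        rw [le_div_iff₀ hpos] at hj1
        rw [div_lt_iff₀ hpos] at hj2
        exact mem_iUnion.2 ⟨j, hj1, hj2⟩
    have hm1 : ∀ A : Set ℝ, Measurable fun a : (Fin n → ℝ) × (Fin n → ℝ) =>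
        ∫⁻ t in A, G (a.1 + t • a.2) := fun A =>
      Measurable.lintegral_prod_right' (f := fun b : ((Fin n → ℝ) × (Fin n → ℝ)) × ℝ =>
        G (b.1.1 + b.2 • b.1.2)) (by fun_prop)
    have hm2 : ∀ A : Set ℝ, Measurable fun z : Fin n → ℝ =>
        ∫⁻ θ in Θ, ∫⁻ t in A, G (z + t • θ) := fun A =>
      Measurable.lintegral_prod_right' (f := fun a : (Fin n → ℝ) × (Fin n → ℝ) =>
        ∫⁻ t in A, G (a.1 + t • a.2)) (hm1 A)
    have hm3 : ∀ (A : Set ℝ) (z : Fin n → ℝ), Measurable fun θ : Fin n → ℝ =>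
        ∫⁻ t in A, G (z + t • θ) := fun A z =>
      Measurable.lintegral_prod_right' (f := fun b : (Fin n → ℝ) × ℝ => G (z + b.2 • b.1))
        (by fun_prop)
    calc I (Ioi 0) ≤ ∫⁻ z in B, ∫⁻ θ in Θ, ((∫⁻ t in Ioc 0 h, G (z + t • θ)) +
          ∑' j : ℕ, ∫⁻ t in Ico (2 ^ j * h) (2 ^ (j + 1) * h), G (z + t • θ)) := by
          refine lintegral_mono fun z => lintegral_mono fun θ => ?_
          refine (lintegral_mono_set hcov).trans ((lintegral_union_le _ _ _).trans ?_)
          exact add_le_add_right (lintegral_iUnion_le _ _) _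
      _ = _ := by
          simp_rw [hI]
          rw [← lintegral_tsum fun j => (hm2 _).aemeasurable, ← lintegral_add_left (hm2 _)]
          refine lintegral_congr fun z => ?_
          rw [← lintegral_tsum fun j => (hm3 _ z).aemeasurable, ← lintegral_add_left (hm3 _ z)]
  -- `ρ⁻ⁿ` is comparable to the inverse of the volume of any ball of comparable radius
  have a3 : ∀ j : ℕ, I (Ico (2 ^ j * h) (2 ^ (j + 1) * h)) ≤
      volume B * (ENNReal.ofReal (8 ^ n) * T (m + j + 2)) := by
    intro j
    set ρ : ℝ := 2 ^ j * h with hρ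
    have hρ0 : 0 < ρ := by positivity
    have hρh : h ≤ ρ := le_mul_of_one_le_left hpos.le (one_le_pow₀ (by norm_num))
    have e4 : (2 : ℝ) ^ (m + j + 2) = 4 * ρ := by
      rw [zpow_add₀ (by norm_num), zpow_add₀ (by norm_num), hρ, hh, zpow_natCast]; norm_num; ring
    have e5 : 2 ^ (j + 1) * h = 2 * ρ := by rw [hρ]; ring
    rw [e5]
    have hz : ∀ z ∈ B, ∫⁻ θ in Θ, ∫⁻ t in Ico ρ (2 * ρ), G (z + t • θ) ≤
        ENNReal.ofReal (8 ^ n) * T (m + j + 2) := by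
      intro z hzB
      have hd : dist z x ≤ h := hzB
      rw [lintegral_lintegral_swap (Measurable.aemeasurable (by fun_prop))]
      calc ∫⁻ t in Ico ρ (2 * ρ), ∫⁻ θ in Θ, G (z + t • θ)
          ≤ ∫⁻ t in Ico ρ (2 * ρ), ENNReal.ofReal ((ρ ^ n)⁻¹) *
              ∫⁻ y in Metric.closedBall x (4 * ρ), G y := by
            refine setLIntegral_mono' measurableSet_Ico fun t ht => ?_
            rw [lintegral_unit_ball_comp hG z (hρ0.trans_le ht.1)]
            refine mul_le_mul' (ENNReal.ofReal_le_ofReal ?_) (lintegral_mono_set ?_)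
            · have := ht.1
              gcongr
            · apply Metric.closedBall_subset_closedBall'
              linarith [ht.2]
        _ = ENNReal.ofReal ((ρ ^ n)⁻¹) * (∫⁻ y in Metric.closedBall x (4 * ρ), G y) *
              ENNReal.ofReal ρ := by
            rw [setLIntegral_const, Real.volume_Ico]
            congr 2; ring
        _ ≤ _ := by
            rw [hT]
            simp only [e4]
            rw [vol_ball x (by positivity), div_eq_mul_inv, ← ENNReal.ofReal_inv_of_pos (by positivity)]
            calc _ = ENNReal.ofReal (8 ^ n) * (ENNReal.ofReal ρ *
                  ((∫⁻ y in Metric.closedBall x (4 * ρ), G y) *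
                    ENNReal.ofReal ((2 * (4 * ρ)) ^ n)⁻¹)) := by
                  have : ENNReal.ofReal ((ρ ^ n)⁻¹) = ENNReal.ofReal (8 ^ n) *
                      ENNReal.ofReal ((2 * (4 * ρ)) ^ n)⁻¹ := by
                    rw [← ENNReal.ofReal_mul (by positivity)]
                    congr 1
                    rw [show 2 * (4 * ρ) = 8 * ρ by ring, mul_pow 8 ρ n,
                      mul_inv (8 ^ n) (ρ ^ n),
                      mul_inv_cancel_left₀ (by positivity)]
                  rw [this]; ring
              _ ≤ _ := by
                  refine mul_le_mul_right (mul_le_mul_left (ENNReal.ofReal_le_ofReal ?_) _) _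
                  linarith
    calc _ ≤ ∫⁻ z in B, ENNReal.ofReal (8 ^ n) * T (m + j + 2) :=
          setLIntegral_mono' measurableSet_closedBall hz
      _ = _ := by rw [setLIntegral_const, mul_comm]
  have a4 : I (Ioc 0 h) ≤ volume B * (ENNReal.ofReal (8 ^ n) * T (m + 1)) := by
    have e4 : (2 : ℝ) ^ (m + 1) = 2 * h := by
      rw [zpow_add₀ (by norm_num), hh, zpow_one]; ring
    have hm4 : Measurable fun a : (Fin n → ℝ) × (Fin n → ℝ) =>
        ∫⁻ t in Ioc 0 h, G (a.1 + t • a.2) :=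
      Measurable.lintegral_prod_right' (f := fun b : ((Fin n → ℝ) × (Fin n → ℝ)) × ℝ =>
        G (b.1.1 + b.2 • b.1.2)) (by fun_prop)
    calc I (Ioc 0 h) = ∫⁻ θ in Θ, ∫⁻ t in Ioc 0 h, ∫⁻ z in B, G (z + t • θ) := by
          rw [hI]
          simp only []
          rw [lintegral_lintegral_swap hm4.aemeasurable]
          refine lintegral_congr fun θ => ?_
          rw [lintegral_lintegral_swap (Measurable.aemeasurable (by fun_prop))]
      _ ≤ ∫⁻ θ in Θ, ∫⁻ t in Ioc 0 h, ∫⁻ y in Metric.closedBall x (2 * h), G y := by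
          refine setLIntegral_mono' measurableSet_closedBall fun θ hθ => ?_
          refine setLIntegral_mono' measurableSet_Ioc fun t ht => ?_
          have hθ1 : ‖θ‖ ≤ 1 := by simpa [hΘ] using hθ
          rw [← lintegral_indicator measurableSet_closedBall,
            ← lintegral_indicator measurableSet_closedBall,
            ← lintegral_add_right_eq_self ((Metric.closedBall x (2 * h)).indicator G) (t • θ)]
          refine lintegral_mono fun z => ?_
          by_cases hz : z ∈ B
          · rw [indicator_of_mem hz, indicator_of_mem]
            rw [mem_closedBall_iff_norm] at hz ⊢
            calc ‖z + t • θ - x‖ = ‖(z - x) + t • θ‖ := by congr 1; abel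
              _ ≤ ‖z - x‖ + ‖t • θ‖ := norm_add_le _ _
              _ ≤ h + h * 1 := by
                  rw [norm_smul, Real.norm_of_nonneg ht.1.le]
                  gcongr
                  exact ht.2
              _ = 2 * h := by ring
          · rw [indicator_of_notMem hz]; exact bot_le
      _ = volume Θ * ENNReal.ofReal h * ∫⁻ y in Metric.closedBall x (2 * h), G y := by
          rw [setLIntegral_const, setLIntegral_const, Real.volume_Ioc, sub_zero]
          ring
      _ ≤ _ := by
          rw [hT]
          simp only [e4]
          have hv2 : volume (Metric.closedBall x (2 * h)) = ENNReal.ofReal (2 ^ n) * volume B :=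
            vol_ball_mul x x hpos (by norm_num)
          have h8 : volume Θ ≤ ENNReal.ofReal (8 ^ n) * volume B *
              (volume (Metric.closedBall x (2 * h)))⁻¹ := by
            rw [← div_eq_mul_inv, ENNReal.le_div_iff_mul_le (Or.inl (vol_ball_ne_zero x (by positivity)))
              (Or.inl (vol_ball_ne_top x (by positivity))), hv2, ← mul_assoc, hΘv,
              ← ENNReal.ofReal_mul (by positivity), ← mul_pow]
            gcongr; norm_num
          calc _ ≤ (ENNReal.ofReal (8 ^ n) * volume B *
              (volume (Metric.closedBall x (2 * h)))⁻¹) * ENNReal.ofReal (2 * h) *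
                ∫⁻ y in Metric.closedBall x (2 * h), G y := by
                refine mul_le_mul_left (mul_le_mul' h8 (ENNReal.ofReal_le_ofReal ?_)) _
                linarith
            _ = _ := by rw [div_eq_mul_inv]; ring
  have a5 : T (m + 1) ≤ ∑' k, T k := ENNReal.le_tsum _
  have a6 : ∑' j : ℕ, T (m + j + 2) ≤ ∑' k, T k :=
    ENNReal.tsum_comp_le_tsum_of_injective (f := fun j : ℕ => m + (j : ℤ) + 2)
      (fun i j hij => by simpa using hij) T
  rw [ENNReal.div_le_iff hV0 hVt, ← ENNReal.mul_le_mul_iff_right hΘ0 hΘt]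
  calc volume Θ * ∫⁻ z in B, ‖φ z‖ₑ
      ≤ volume B * (ENNReal.ofReal (8 ^ n) * T (m + 1)) +
          ∑' j : ℕ, volume B * (ENNReal.ofReal (8 ^ n) * T (m + j + 2)) :=
        a1.trans (a2.trans (add_le_add a4 (ENNReal.tsum_le_tsum a3)))
    _ ≤ volume B * (ENNReal.ofReal (8 ^ n) * ∑' k, T k) +
          volume B * (ENNReal.ofReal (8 ^ n) * ∑' k, T k) := by
        rw [ENNReal.tsum_mul_left, ENNReal.tsum_mul_left]
        gcongr
    _ = _ := by
        rw [hJ, hΘv, show (8 : ℝ) ^ n = 2 ^ n * 4 ^ n by rw [← mul_pow]; norm_num,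
          ENNReal.ofReal_mul (by positivity)]
        ring

/-! ### A local Sobolev inequality -/

lemma exists_cutoff (n : ℕ) : ∃ C : ℝ, 0 ≤ C ∧ ∀ (x : Fin n → ℝ) (h : ℝ), 0 < h →
    ∃ η : (Fin n → ℝ) → ℝ, ContDiff ℝ 1 η ∧ HasCompactSupport η ∧
      (∀ y ∈ Metric.closedBall x h, η y = 1) ∧ (∀ y, ‖η y‖ ≤ 1) ∧
      (∀ y, y ∉ Metric.closedBall x (2 * h) → η y = 0 ∧ fderiv ℝ η y = 0) ∧
      ∀ y, ‖fderiv ℝ η y‖ ≤ C * h⁻¹ := by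
  let b : ContDiffBump (0 : Fin n → ℝ) := ⟨1, 2, one_pos, one_lt_two⟩
  have hb : ContDiff ℝ 1 b := b.contDiff
  have hbs : HasCompactSupport b := b.hasCompactSupport
  obtain ⟨C, hC⟩ := (hbs.fderiv (𝕜 := ℝ)).exists_bound_of_continuous
    (hb.continuous_fderiv (by norm_num))
  have hC0 : 0 ≤ C := (norm_nonneg _).trans (hC 0)
  refine ⟨C, hC0, fun x h hh => ?_⟩
  set A : (Fin n → ℝ) → (Fin n → ℝ) := fun y => h⁻¹ • (y - x) with hA
  have hnorm : ∀ y, ‖A y‖ = h⁻¹ * dist y x := by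
    intro y
    rw [hA, norm_smul, Real.norm_of_nonneg (by positivity), dist_eq_norm]
  have hAd : ∀ y, HasFDerivAt A (h⁻¹ • ContinuousLinearMap.id ℝ (Fin n → ℝ)) y := fun y =>
    ((hasFDerivAt_id y).sub_const x).const_smul h⁻¹
  have hfd : ∀ y, fderiv ℝ (b ∘ A) y =
      (fderiv ℝ b (A y)).comp (h⁻¹ • ContinuousLinearMap.id ℝ (Fin n → ℝ)) := fun y =>
    (((hb.differentiable (by norm_num)) (A y)).hasFDerivAt.comp y (hAd y)).fderiv
  have hout : ∀ y, y ∉ Metric.closedBall x (2 * h) → A y ∉ tsupport b := by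
    intro y hy
    rw [b.tsupport_eq, mem_closedBall_zero_iff, hnorm, not_le]
    rw [Metric.mem_closedBall, not_le] at hy
    change 2 < h⁻¹ * dist y x
    rw [inv_mul_eq_div, lt_div_iff₀ hh]
    exact hy
  have hz : ∀ y, y ∉ Metric.closedBall x (2 * h) →
      (b ∘ A) y = 0 ∧ fderiv ℝ (b ∘ A) y = 0 := by
    intro y hy
    have h1 := hout y hy
    refine ⟨(image_eq_zero_of_notMem_tsupport (f := b) h1 : b (A y) = 0), ?_⟩
    have : fderiv ℝ b (A y) = 0 := by
      by_contra h2
      exact h1 (support_fderiv_subset ℝ h2)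
    rw [hfd, this, ContinuousLinearMap.zero_comp]
  refine ⟨b ∘ A, hb.comp (by fun_prop), ?_, ?_, ?_, hz, ?_⟩
  · exact HasCompactSupport.intro (isCompact_closedBall x (2 * h)) fun y hy => (hz y hy).1
  · intro y hy
    apply b.one_of_mem_closedBall
    rw [mem_closedBall_zero_iff, hnorm]
    change h⁻¹ * dist y x ≤ 1
    rw [inv_mul_le_iff₀ hh, mul_one]; exact hy
  · intro y
    rw [Function.comp_apply, Real.norm_of_nonneg b.nonneg]; exact b.le_one
  · intro y
    rw [hfd]
    refine (ContinuousLinearMap.opNorm_comp_le _ _).trans ?_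
    have h3 : ‖h⁻¹ • ContinuousLinearMap.id ℝ (Fin n → ℝ)‖ ≤ h⁻¹ := by
      rw [norm_smul, Real.norm_of_nonneg (by positivity)]
      exact mul_le_of_le_one_right (by positivity) ContinuousLinearMap.norm_id_le
    exact mul_le_mul (hC _) h3 (norm_nonneg _) hC0

/-- The `L¹` Gagliardo–Nirenberg–Sobolev inequality applied to the product of `U` with a cutoff. -/
lemma exists_local_sobolev (n : ℕ) (hn : 2 ≤ n) : ∃ C : ℝ≥0∞, C ≠ ∞ ∧
    ∀ U : (Fin n → ℝ) → ℝ, ContDiff ℝ 1 U → ∀ (x : Fin n → ℝ) (h : ℝ), 0 < h →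
      ∫⁻ y in Metric.closedBall x h, ‖U y‖ₑ ^ ((n : ℝ) / (n - 1)) ≤
        C * ((∫⁻ y in Metric.closedBall x (2 * h), ‖fderiv ℝ U y‖ₑ) +
          ENNReal.ofReal h⁻¹ * ∫⁻ y in Metric.closedBall x (2 * h), ‖U y‖ₑ) ^
            ((n : ℝ) / (n - 1)) := by
  obtain ⟨Ce, hCe, hcut⟩ := exists_cutoff n
  have hn' : (2 : ℝ) ≤ n := by exact_mod_cast hn
  have hn1 : (0 : ℝ) < n - 1 := by linarith
  set s : ℝ := (n : ℝ) / (n - 1) with hs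
  have hs0 : 0 < s := by positivity
  have hconj : Real.HolderConjugate (Module.finrank ℝ (Fin n → ℝ)) s := by
    rw [Module.finrank_fin_fun]
    exact Real.HolderConjugate.conjExponent (by linarith)
  set D : ℝ≥0∞ := max 1 (ENNReal.ofReal Ce) with hD
  refine ⟨lintegralPowLePowLIntegralFDerivConst (volume : Measure (Fin n → ℝ)) s * D ^ s, ?_, ?_⟩
  · have : D ≠ ∞ := by simp [hD]
    finiteness
  intro U hU x h hh
  obtain ⟨η, h1, h2, h3, h4, h5, h6⟩ := hcut x h hh
  have hg : ContDiff ℝ 1 (fun y => η y * U y) := h1.mul hU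
  have hgs : HasCompactSupport (fun y => η y * U y) := h2.mul_right
  have gns := lintegral_pow_le_pow_lintegral_fderiv (volume : Measure (Fin n → ℝ)) hg hgs hconj
  have hUm : Measurable fun y => ‖U y‖ₑ := hU.continuous.measurable.enorm
  have hUm' : Measurable fun y => ‖fderiv ℝ U y‖ₑ :=
    (hU.continuous_fderiv (by norm_num)).measurable.enorm
  have hfd : ∀ y, ‖fderiv ℝ (fun y => η y * U y) y‖ₑ ≤
      (Metric.closedBall x (2 * h)).indicator
        (fun y => D * (‖fderiv ℝ U y‖ₑ + ENNReal.ofReal h⁻¹ * ‖U y‖ₑ)) y := by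
    intro y
    have e : fderiv ℝ (fun y => η y * U y) y = η y • fderiv ℝ U y + U y • fderiv ℝ η y :=
      fderiv_fun_mul (h1.differentiable (by norm_num) y) (hU.differentiable (by norm_num) y)
    rw [e]
    by_cases hy : y ∈ Metric.closedBall x (2 * h)
    · rw [indicator_of_mem hy, mul_add]
      refine (enorm_add_le (η y • fderiv ℝ U y) (U y • fderiv ℝ η y)).trans (add_le_add ?_ ?_)
      · rw [enorm_smul]
        refine mul_le_mul_left ?_ _
        refine le_trans ?_ (le_max_left _ _)
        rw [← ofReal_norm]; exact ENNReal.ofReal_le_one.2 (h4 y)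
      · rw [enorm_smul, mul_comm, ← mul_assoc]
        refine mul_le_mul_left ?_ _
        rw [← ofReal_norm]
        refine (ENNReal.ofReal_le_ofReal (h6 y)).trans ?_
        rw [ENNReal.ofReal_mul hCe]
        exact mul_le_mul_left (le_max_right _ _) _
    · rw [indicator_of_notMem hy, (h5 y hy).1, (h5 y hy).2, zero_smul, smul_zero,
        add_zero, ← ofReal_norm, norm_zero, ENNReal.ofReal_zero]
  have hm : Measurable fun y => ‖fderiv ℝ U y‖ₑ + ENNReal.ofReal h⁻¹ * ‖U y‖ₑ :=
    hUm'.add (hUm.const_mul _)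
  calc ∫⁻ y in Metric.closedBall x h, ‖U y‖ₑ ^ s
      = ∫⁻ y in Metric.closedBall x h, ‖η y * U y‖ₑ ^ s := by
        refine setLIntegral_congr_fun measurableSet_closedBall fun y hy => ?_
        simp only [h3 y hy, one_mul]
    _ ≤ ∫⁻ y, ‖η y * U y‖ₑ ^ s := setLIntegral_le_lintegral _ _
    _ ≤ _ := gns
    _ ≤ lintegralPowLePowLIntegralFDerivConst (volume : Measure (Fin n → ℝ)) s *
        (D * ((∫⁻ y in Metric.closedBall x (2 * h), ‖fderiv ℝ U y‖ₑ) +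
          ENNReal.ofReal h⁻¹ * ∫⁻ y in Metric.closedBall x (2 * h), ‖U y‖ₑ)) ^ s := by
        refine mul_le_mul_right (ENNReal.rpow_le_rpow ?_ hs0.le) _
        refine (lintegral_mono hfd).trans (le_of_eq ?_)
        rw [lintegral_indicator measurableSet_closedBall,
          lintegral_const_mul _ hm, lintegral_add_left hUm',
          lintegral_const_mul _ hUm]
    _ = _ := by rw [ENNReal.mul_rpow_of_nonneg _ _ hs0.le]; ring

/-! ### Smooth truncation -/

/-- A smooth even cutoff on the line: `0` on `[-1/4, 1/4]` and `1` outside `(-1/2, 1/2)`. -/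
def trunc (t : ℝ) : ℝ := Real.smoothTransition ((16 / 3) * (t ^ 2 - 1 / 16))

lemma trunc_contDiff : ContDiff ℝ 1 trunc :=
  Real.smoothTransition.contDiff.comp (by fun_prop)

lemma trunc_nonneg (t : ℝ) : 0 ≤ trunc t := Real.smoothTransition.nonneg _

lemma trunc_le_one (t : ℝ) : trunc t ≤ 1 := Real.smoothTransition.le_one _

lemma trunc_zero {t : ℝ} (h : |t| ≤ 1 / 4) : trunc t = 0 := by
  apply Real.smoothTransition.zero_of_nonpos
  have : t ^ 2 ≤ (1 / 4) ^ 2 := by rw [sq_le_sq]; simpa using h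
  linarith

lemma trunc_one {t : ℝ} (h : 1 / 2 ≤ |t|) : trunc t = 1 := by
  apply Real.smoothTransition.one_of_one_le
  have : (1 / 2) ^ 2 ≤ t ^ 2 := by rw [sq_le_sq]; simpa using h
  linarith

/-- The derivative vanishes wherever `trunc` attains its extreme values `0` and `1`, in
particular also at the endpoints of the transition region. -/
lemma trunc_deriv_zero {t : ℝ} (h : ¬ (1 / 4 < |t| ∧ |t| < 1 / 2)) : deriv trunc t = 0 := by
  by_cases h1 : 1 / 4 < |t|
  · have h2 : 1 / 2 ≤ |t| := not_lt.1 fun h2 => h ⟨h1, h2⟩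
    apply IsLocalMax.deriv_eq_zero
    exact Eventually.of_forall fun s => by rw [trunc_one h2]; exact trunc_le_one s
  · apply IsLocalMin.deriv_eq_zero
    exact Eventually.of_forall fun s => by rw [trunc_zero (not_lt.1 h1)]; exact trunc_nonneg s

lemma exists_trunc_deriv : ∃ C : ℝ, 0 ≤ C ∧ ∀ t, |deriv trunc t| ≤ C := by
  have hc : Continuous (deriv trunc) := trunc_contDiff.continuous_deriv (by norm_num)
  obtain ⟨C, hC⟩ := (isCompact_Icc (a := (-1 / 2 : ℝ)) (b := 1 / 2)).exists_bound_of_continuousOn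
    hc.continuousOn
  have hC0 : 0 ≤ C := (norm_nonneg _).trans (hC 0 (by norm_num))
  refine ⟨C, hC0, fun t => ?_⟩
  by_cases h : 1 / 4 < |t| ∧ |t| < 1 / 2
  · refine hC t ?_
    have := abs_lt.1 h.2
    constructor <;> linarith
  · rw [trunc_deriv_zero h]; simpa using hC0

/-- A smooth substitute for the truncation of the identity to `|t| > 1`. -/
def strunc (t : ℝ) : ℝ := t * trunc (t / 2)

lemma strunc_contDiff : ContDiff ℝ 1 strunc :=
  contDiff_id.mul (trunc_contDiff.comp (by fun_prop))

lemma abs_le_strunc (t : ℝ) : |t| ≤ 1 + |strunc t| := by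
  rcases le_or_gt |t| 1 with h | h
  · linarith [abs_nonneg (strunc t)]
  · rw [strunc, trunc_one, mul_one]
    · linarith
    · rw [abs_div, abs_two]; linarith

lemma abs_strunc_le (t : ℝ) : |strunc t| ≤ |t| * trunc t := by
  rw [strunc, abs_mul, abs_of_nonneg (trunc_nonneg _)]
  refine mul_le_mul_of_nonneg_left ?_ (abs_nonneg _)
  rcases le_or_gt |t| (1 / 2) with h | h
  · rw [trunc_zero]
    · exact trunc_nonneg _
    · rw [abs_div, abs_two]; linarith
  · rw [trunc_one h.le]; exact trunc_le_one _

lemma exists_strunc_deriv : ∃ C : ℝ, 0 ≤ C ∧ ∀ t, |deriv strunc t| ≤ C := by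
  obtain ⟨C, hC0, hC⟩ := exists_trunc_deriv
  refine ⟨1 + C, by positivity, fun t => ?_⟩
  have hd : HasDerivAt strunc (1 * trunc (t / 2) + t * (deriv trunc (t / 2) * (1 / 2))) t := by
    have h1 : HasDerivAt (fun t : ℝ => t / 2) (1 / 2) t := (hasDerivAt_id t).div_const 2
    have h2 : HasDerivAt trunc (deriv trunc (t / 2)) (t / 2) :=
      (trunc_contDiff.differentiable (by norm_num) _).hasDerivAt
    have h3 : HasDerivAt (fun t => trunc (t / 2)) (deriv trunc (t / 2) * (1 / 2)) t :=
      HasDerivAt.comp (h₂ := trunc) t h2 h1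
    exact (hasDerivAt_id t).mul h3
  rw [hd.deriv]
  refine (abs_add_le _ _).trans (add_le_add ?_ ?_)
  · rw [one_mul, abs_of_nonneg (trunc_nonneg _)]; exact trunc_le_one _
  · by_cases h : 1 / 4 < |t / 2| ∧ |t / 2| < 1 / 2
    · rw [show t * (deriv trunc (t / 2) * (1 / 2)) = (t / 2) * deriv trunc (t / 2) by ring, abs_mul]
      calc _ ≤ 1 * C := mul_le_mul (by linarith [h.2]) (hC _) (abs_nonneg _) (by norm_num)
        _ = C := one_mul _
    · rw [trunc_deriv_zero h]; simpa using hC0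

/-! ### Lower bounds where the maximal function is of unit size -/

lemma enorm_fderiv_comp {g : ℝ → ℝ} (hg : ContDiff ℝ 1 g) {F : (Fin n → ℝ) → ℝ}
    (hF : ContDiff ℝ 1 F) (y : Fin n → ℝ) :
    ‖fderiv ℝ (fun y => g (F y)) y‖ₑ = ENNReal.ofReal |deriv g (F y)| * ‖fderiv ℝ F y‖ₑ := by
  have h1 : HasDerivAt g (deriv g (F y)) (F y) :=
    (hg.differentiable (by norm_num) _).hasDerivAt
  have h2 : HasFDerivAt F (fderiv ℝ F y) y := (hF.differentiable (by norm_num) _).hasFDerivAt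
  have h3 : HasFDerivAt (fun y => g (F y)) (deriv g (F y) • fderiv ℝ F y) y :=
    HasDerivAt.comp_hasFDerivAt (h₂ := g) y h1 h2
  rw [h3.fderiv, ← ofReal_norm, norm_smul, ENNReal.ofReal_mul (norm_nonneg _), Real.norm_eq_abs,
    ofReal_norm]

/-- Where the maximal function `M_{n'} F` is comparable to `1`, either the fractional maximal
function of the gradient or the maximal function of the truncation `trunc ∘ F` is bounded below.
On a ball with large `L^{n'}` average, the truncation `strunc ∘ F` still has a large average, and
the local Sobolev inequality applies to it; Hölder's inequality estimates the zeroth order term. -/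
lemma exists_trunc_max (n : ℕ) (hn : 2 ≤ n) : ∃ C : ℝ≥0∞, C ≠ ∞ ∧
    ∀ F : (Fin n → ℝ) → ℝ, ContDiff ℝ 1 F → ∀ x : Fin n → ℝ,
      (2 : ℝ≥0∞) ^ ((n : ℝ) / (n - 1)) < MC volume (fun y => ‖F y‖ₑ ^ ((n : ℝ) / (n - 1))) x →
      MC volume (fun y => ‖F y‖ₑ ^ ((n : ℝ) / (n - 1))) x ≤ (4 : ℝ≥0∞) ^ ((n : ℝ) / (n - 1)) →
      1 ≤ C * (M1 (fun y => ‖fderiv ℝ F y‖ₑ) x +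
        MC volume (fun y => ‖trunc (F y)‖ₑ) x ^ (1 / (n : ℝ))) := by
  obtain ⟨Cs, hCs, hsob⟩ := exists_local_sobolev n hn
  obtain ⟨Cd, hCd0, hCd⟩ := exists_strunc_deriv
  have hn' : (2 : ℝ) ≤ n := by exact_mod_cast hn
  have hn1 : (0 : ℝ) < n - 1 := by linarith
  have hn0 : (0 : ℝ) < n := by linarith
  set s : ℝ := (n : ℝ) / (n - 1) with hs
  have hs1 : 1 ≤ s := by rw [hs, le_div_iff₀ hn1]; linarith
  have hs0 : 0 < s := by linarith
  have hconj : Real.HolderConjugate s n := (Real.HolderConjugate.conjExponent (by linarith)).symm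
  set D : ℝ≥0∞ := ENNReal.ofReal Cd + 4 with hD
  have hDt : D ≠ ∞ := by simp [hD]
  set C0 : ℝ≥0∞ := Cs * ((2 : ℝ≥0∞) ^ (n + 1) * D) ^ s with hC0
  have hC0t : C0 ≠ ∞ := by finiteness
  refine ⟨C0 ^ s⁻¹, by finiteness, fun F hF x hlo hhi => ?_⟩
  set A : ℝ≥0∞ := M1 (fun y => ‖fderiv ℝ F y‖ₑ) x with hA
  set T : ℝ≥0∞ := MC volume (fun y => ‖trunc (F y)‖ₑ) x with hT
  obtain ⟨k, hk⟩ := lt_iSup_iff.1 hlo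
  have hh : (0 : ℝ) < 2 ^ k := by positivity
  have hFm : Measurable fun y => ‖F y‖ₑ := hF.continuous.measurable.enorm
  have hFdm : Measurable fun y => ‖fderiv ℝ F y‖ₑ :=
    (hF.continuous_fderiv (by norm_num)).measurable.enorm
  have hU : ContDiff ℝ 1 (fun y => strunc (F y)) := strunc_contDiff.comp hF
  have hTm : Measurable fun y => ‖trunc (F y)‖ₑ :=
    (trunc_contDiff.continuous.comp hF.continuous).measurable.enorm
  have hUm : Measurable fun y => ‖strunc (F y)‖ₑ ^ s := hU.continuous.measurable.enorm.pow_const _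
  have e2 : (2 : ℝ) * 2 ^ k = 2 ^ (k + 1) := by rw [zpow_add₀ (by norm_num)]; ring
  set h : ℝ := 2 ^ k with hhd
  set V := volume (Metric.closedBall x h) with hV
  set V2 := volume (Metric.closedBall x (2 * h)) with hV2
  have hV0 : V ≠ 0 := vol_ball_ne_zero x hh
  have hVt : V ≠ ∞ := vol_ball_ne_top x hh
  have hV20 : V2 ≠ 0 := vol_ball_ne_zero x (by positivity)
  have hV2t : V2 ≠ ∞ := vol_ball_ne_top x (by positivity)
  -- the truncation keeps a large average
  have hI : V ≤ ∫⁻ y in Metric.closedBall x h, ‖strunc (F y)‖ₑ ^ s := by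
    set I := ∫⁻ y in Metric.closedBall x h, ‖strunc (F y)‖ₑ ^ s
    have h1 : (2 : ℝ≥0∞) ^ s * V < ∫⁻ y in Metric.closedBall x h, ‖F y‖ₑ ^ s := by
      rwa [ENNReal.lt_div_iff_mul_lt (Or.inl hV0) (Or.inl hVt)] at hk
    have h2 : ∫⁻ y in Metric.closedBall x h, ‖F y‖ₑ ^ s ≤ (2 : ℝ≥0∞) ^ (s - 1) * (V + I) := by
      have hm : Measurable fun y => 1 + ‖strunc (F y)‖ₑ ^ s := hUm.const_add 1
      calc ∫⁻ y in Metric.closedBall x h, ‖F y‖ₑ ^ s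
          ≤ ∫⁻ y in Metric.closedBall x h, (2 : ℝ≥0∞) ^ (s - 1) * (1 + ‖strunc (F y)‖ₑ ^ s) := by
            refine lintegral_mono fun y => ?_
            have h3 : ‖F y‖ₑ ≤ 1 + ‖strunc (F y)‖ₑ := by
              rw [← ofReal_norm, ← ofReal_norm, ← ENNReal.ofReal_one,
                ← ENNReal.ofReal_add zero_le_one (norm_nonneg _)]
              exact ENNReal.ofReal_le_ofReal (abs_le_strunc _)
            refine (ENNReal.rpow_le_rpow h3 hs0.le).trans ?_
            have h4 := ENNReal.rpow_add_le_mul_rpow_add_rpow 1 ‖strunc (F y)‖ₑ hs1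
            rwa [ENNReal.one_rpow] at h4
        _ = _ := by
            rw [lintegral_const_mul _ hm, lintegral_add_left measurable_const]
            simp [I, V]
    have h5 : (2 : ℝ≥0∞) ^ s = 2 ^ (s - 1) * 2 := by
      conv_rhs => rw [← ENNReal.rpow_one 2, ← ENNReal.rpow_mul]
      rw [← ENNReal.rpow_add _ _ (by simp) (by simp)]
      congr 1; ring
    have h6 := h1.trans_le h2
    rw [h5, mul_assoc] at h6
    have h7 : 2 * V < V + I := lt_of_mul_lt_mul_left' h6
    rw [two_mul] at h7
    exact ((ENNReal.add_lt_add_iff_left hVt).1 h7).le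
  have hgrad : ∫⁻ y in Metric.closedBall x (2 * h), ‖fderiv ℝ (fun y => strunc (F y)) y‖ₑ ≤
      ENNReal.ofReal h⁻¹ * V2 * (ENNReal.ofReal Cd * A) := by
    have h1 : ENNReal.ofReal (2 * h) * ((∫⁻ y in Metric.closedBall x (2 * h), ‖fderiv ℝ F y‖ₑ) /
        V2) ≤ A := by
      rw [hA, M1, hV2, e2]
      exact le_iSup (fun k : ℤ => ENNReal.ofReal ((2 : ℝ) ^ k) *
        ((∫⁻ y in Metric.closedBall x ((2 : ℝ) ^ k), ‖fderiv ℝ F y‖ₑ) /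
          volume (Metric.closedBall x ((2 : ℝ) ^ k)))) (k + 1)
    have h2 : ∫⁻ y in Metric.closedBall x (2 * h), ‖fderiv ℝ F y‖ₑ ≤
        ENNReal.ofReal h⁻¹ * V2 * A := by
      set X := ∫⁻ y in Metric.closedBall x (2 * h), ‖fderiv ℝ F y‖ₑ
      calc X = ENNReal.ofReal h⁻¹ * V2 * (ENNReal.ofReal h * (X / V2)) := by
            rw [show ENNReal.ofReal h⁻¹ * V2 * (ENNReal.ofReal h * (X / V2)) =
              (ENNReal.ofReal h⁻¹ * ENNReal.ofReal h) * (V2 * (X / V2)) by ring,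
              ← ENNReal.ofReal_mul (by positivity), inv_mul_cancel₀ hh.ne', ENNReal.ofReal_one,
              one_mul, ENNReal.mul_div_cancel hV20 hV2t]
        _ ≤ _ := by
            refine mul_le_mul_right (le_trans ?_ h1) _
            refine mul_le_mul_left (ENNReal.ofReal_le_ofReal (by linarith)) _
    calc _ ≤ ∫⁻ y in Metric.closedBall x (2 * h), ENNReal.ofReal Cd * ‖fderiv ℝ F y‖ₑ := by
          refine lintegral_mono fun y => ?_
          rw [enorm_fderiv_comp strunc_contDiff hF]
          exact mul_le_mul_left (ENNReal.ofReal_le_ofReal (hCd _)) _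
      _ = ENNReal.ofReal Cd * ∫⁻ y in Metric.closedBall x (2 * h), ‖fderiv ℝ F y‖ₑ :=
          lintegral_const_mul _ hFdm
      _ ≤ ENNReal.ofReal Cd * (ENNReal.ofReal h⁻¹ * V2 * A) := mul_le_mul_right h2 _
      _ = _ := by ring
  have hzero : ∫⁻ y in Metric.closedBall x (2 * h), ‖strunc (F y)‖ₑ ≤
      V2 * (4 * T ^ (1 / (n : ℝ))) := by
    have h1 : ∫⁻ y in Metric.closedBall x (2 * h), ‖F y‖ₑ ^ s ≤ 4 ^ s * V2 := by
      rw [hV2, e2]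
      refine (lintegral_ball_le_MC volume _ x (k + 1) (by rw [← e2]; exact hV2t)).trans ?_
      exact mul_le_mul_left hhi _
    have h2 : ∫⁻ y in Metric.closedBall x (2 * h), ‖trunc (F y)‖ₑ ^ (n : ℝ) ≤ T * V2 := by
      refine le_trans (lintegral_mono fun y => ?_) (?_ :
        ∫⁻ y in Metric.closedBall x (2 * h), ‖trunc (F y)‖ₑ ≤ T * V2)
      · have h3 : ‖trunc (F y)‖ₑ ≤ 1 := by
          rw [← ofReal_norm, Real.norm_of_nonneg (trunc_nonneg _)]
          exact ENNReal.ofReal_le_one.2 (trunc_le_one _)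
        calc ‖trunc (F y)‖ₑ ^ (n : ℝ) ≤ ‖trunc (F y)‖ₑ ^ (1 : ℝ) :=
              ENNReal.rpow_le_rpow_of_exponent_ge h3 (by linarith)
          _ = _ := ENNReal.rpow_one _
      · rw [hV2, e2]
        exact lintegral_ball_le_MC volume _ x (k + 1) (by rw [← e2]; exact hV2t)
    calc ∫⁻ y in Metric.closedBall x (2 * h), ‖strunc (F y)‖ₑ
        ≤ ∫⁻ y in Metric.closedBall x (2 * h), ‖F y‖ₑ * ‖trunc (F y)‖ₑ := by
          refine lintegral_mono fun y => ?_
          rw [← enorm_mul, ← ofReal_norm, ← ofReal_norm]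
          refine ENNReal.ofReal_le_ofReal ?_
          rw [norm_mul, Real.norm_of_nonneg (trunc_nonneg _)]
          exact abs_strunc_le _
      _ ≤ (∫⁻ y in Metric.closedBall x (2 * h), ‖F y‖ₑ ^ s) ^ (1 / s) *
          (∫⁻ y in Metric.closedBall x (2 * h), ‖trunc (F y)‖ₑ ^ (n : ℝ)) ^ (1 / (n : ℝ)) :=
          ENNReal.lintegral_mul_le_Lp_mul_Lq _ hconj hFm.aemeasurable hTm.aemeasurable
      _ ≤ (4 ^ s * V2) ^ (1 / s) * (T * V2) ^ (1 / (n : ℝ)) := by gcongr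
      _ = (V2 ^ (1 / s) * V2 ^ (1 / (n : ℝ))) * (4 * T ^ (1 / (n : ℝ))) := by
          rw [ENNReal.mul_rpow_of_nonneg _ _ (by positivity),
            ENNReal.mul_rpow_of_nonneg _ _ (by positivity), ← ENNReal.rpow_mul,
            mul_one_div_cancel hs0.ne', ENNReal.rpow_one]
          ring
      _ = _ := by
          rw [← ENNReal.rpow_add _ _ hV20 hV2t]
          have := hconj.inv_add_inv_eq_one
          rw [one_div, one_div, this, ENNReal.rpow_one]
  have hmain := hI.trans (hsob _ hU x h hh)
  set Y := A + T ^ (1 / (n : ℝ)) with hY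
  have hscale : (ENNReal.ofReal h⁻¹ * V2) ^ s = ((2 : ℝ≥0∞) ^ (n + 1)) ^ s * V := by
    have : ENNReal.ofReal h⁻¹ * V2 =
        (2 : ℝ≥0∞) ^ (n + 1) * ENNReal.ofReal ((2 * h) ^ ((n : ℝ) - 1)) := by
      rw [show (2 : ℝ≥0∞) = ENNReal.ofReal 2 by simp, ← ENNReal.ofReal_pow (by norm_num),
        ← ENNReal.ofReal_mul (by positivity), hV2, vol_ball x (by positivity),
        ← ENNReal.ofReal_mul (by positivity), Real.rpow_sub_one (by positivity), Real.rpow_natCast]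
      congr 1
      rw [mul_pow 2 (2 * h), pow_succ 2 n]
      field_simp
    rw [this, ENNReal.mul_rpow_of_nonneg _ _ hs0.le, ENNReal.ofReal_rpow_of_pos (by positivity),
      ← Real.rpow_mul (by positivity), hs, mul_div_cancel₀ _ hn1.ne', Real.rpow_natCast, hV,
      vol_ball x hh]
  have hfin : V ≤ C0 * Y ^ s * V := by
    calc V ≤ _ := hmain
      _ ≤ Cs * (ENNReal.ofReal h⁻¹ * V2 * (D * Y)) ^ s := by
          refine mul_le_mul_right (ENNReal.rpow_le_rpow ?_ hs0.le) _
          calc _ ≤ ENNReal.ofReal h⁻¹ * V2 * (ENNReal.ofReal Cd * A) +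
                ENNReal.ofReal h⁻¹ * (V2 * (4 * T ^ (1 / (n : ℝ)))) :=
                add_le_add hgrad (mul_le_mul_right hzero _)
            _ = ENNReal.ofReal h⁻¹ * V2 * (ENNReal.ofReal Cd * A + 4 * T ^ (1 / (n : ℝ))) := by
                ring
            _ ≤ ENNReal.ofReal h⁻¹ * V2 * (D * A + D * T ^ (1 / (n : ℝ))) := by
                have a1 : ENNReal.ofReal Cd ≤ D := le_self_add
                have a2 : 4 ≤ D := le_add_self
                gcongr
            _ = _ := by rw [hY]; ring
      _ = C0 * Y ^ s * V := by
          rw [ENNReal.mul_rpow_of_nonneg _ _ hs0.le, hscale, hC0,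
            ENNReal.mul_rpow_of_nonneg _ _ hs0.le, ENNReal.mul_rpow_of_nonneg _ _ hs0.le]
          ring
  have h1 : 1 ≤ C0 * Y ^ s := by
    have : 1 * V ≤ C0 * Y ^ s * V := by rwa [one_mul]
    exact (ENNReal.mul_le_mul_iff_left hV0 hVt).1 this
  calc (1 : ℝ≥0∞) = 1 ^ s⁻¹ := (ENNReal.one_rpow _).symm
    _ ≤ (C0 * Y ^ s) ^ s⁻¹ := ENNReal.rpow_le_rpow h1 (by positivity)
    _ = C0 ^ s⁻¹ * Y := by
        rw [ENNReal.mul_rpow_of_nonneg _ _ (by positivity), ← ENNReal.rpow_mul,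
          mul_inv_cancel₀ hs0.ne', ENNReal.rpow_one]

/-! ### The weighted inequality in the sup norm -/

lemma MC_const_mul (μ : Measure (Fin n → ℝ)) (H : (Fin n → ℝ) → ℝ≥0∞) {c : ℝ≥0∞} (hc : c ≠ ∞)
    (x : Fin n → ℝ) : MC μ (fun y => c * H y) x = c * MC μ H x := by
  rw [MC, MC, ENNReal.mul_iSup]
  refine iSup_congr fun k => ?_
  rw [lintegral_const_mul' _ _ hc, mul_div_assoc]

lemma M1_const_mul (H : (Fin n → ℝ) → ℝ≥0∞) {c : ℝ≥0∞} (hc : c ≠ ∞)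
    (x : Fin n → ℝ) : M1 (fun y => c * H y) x = c * M1 H x := by
  rw [M1, M1, ENNReal.mul_iSup]
  refine iSup_congr fun k => ?_
  rw [lintegral_const_mul' _ _ hc, mul_div_assoc]
  ring

lemma two_zpow_neg_mul (k : ℤ) : (2 : ℝ≥0∞) ^ (-k) * 2 ^ k = 1 := by
  rw [← ENNReal.zpow_add (by simp) (by simp)]; simp

lemma two_zpow_ne_top (k : ℤ) : (2 : ℝ≥0∞) ^ k ≠ ∞ :=
  (ENNReal.zpow_lt_top (by simp) (by simp) _).ne

lemma ofReal_two_zpow (k : ℤ) : ENNReal.ofReal ((2 : ℝ) ^ k) = (2 : ℝ≥0∞) ^ k := by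
  rw [← Real.rpow_intCast, ← ENNReal.ofReal_rpow_of_pos (by norm_num), ENNReal.rpow_intCast]; simp

/-- The gradient of a dyadic truncation lives on the level set `2^k/4 < |f| < 2^k/2`. -/
lemma exists_fderiv_trunc : ∃ C : ℝ≥0∞, C ≠ ∞ ∧ ∀ (n : ℕ) (f : (Fin n → ℝ) → ℝ),
    ContDiff ℝ 1 f → ∀ (k : ℤ) (y : Fin n → ℝ),
      ‖fderiv ℝ (fun y => trunc ((2 : ℝ) ^ (-k) * f y)) y‖ₑ ≤
        {y | 1 / 4 < |(2 : ℝ) ^ (-k) * f y| ∧ |(2 : ℝ) ^ (-k) * f y| < 1 / 2}.indicator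
          (fun y => C * (2 : ℝ≥0∞) ^ (-k) * ‖fderiv ℝ f y‖ₑ) y := by
  obtain ⟨C, hC0, hC⟩ := exists_trunc_deriv
  refine ⟨ENNReal.ofReal C, by simp, fun n f hf k y => ?_⟩
  have hl : ContDiff ℝ 1 (fun t : ℝ => (2 : ℝ) ^ (-k) * t) := by fun_prop
  have hF : ContDiff ℝ 1 (fun y => (2 : ℝ) ^ (-k) * f y) := hl.comp hf
  have hd : deriv (fun t : ℝ => (2 : ℝ) ^ (-k) * t) (f y) = 2 ^ (-k) := by simp
  rw [enorm_fderiv_comp trunc_contDiff hF, enorm_fderiv_comp hl hf, hd,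
    abs_of_pos (by positivity : (0 : ℝ) < 2 ^ (-k)), ofReal_two_zpow, ← mul_assoc]
  by_cases hy : y ∈ {y | 1 / 4 < |(2 : ℝ) ^ (-k) * f y| ∧ |(2 : ℝ) ^ (-k) * f y| < 1 / 2}
  · rw [indicator_of_mem hy]
    gcongr
    exact hC _
  · rw [indicator_of_notMem hy, trunc_deriv_zero hy]
    simp

lemma MC_enorm_ne_top {f : (Fin n → ℝ) → ℝ} (hf : Continuous f) (hs : HasCompactSupport f)
    {s : ℝ} (hs0 : 0 ≤ s) (x : Fin n → ℝ) : MC volume (fun y => ‖f y‖ₑ ^ s) x ≠ ∞ := by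
  obtain ⟨B, hB⟩ := hs.exists_bound_of_continuous hf
  refine ne_top_of_le_ne_top (b := ENNReal.ofReal B ^ s) (by finiteness) ?_
  refine iSup_le fun k => ?_
  refine ENNReal.div_le_of_le_mul ?_
  rw [← setLIntegral_const]
  refine lintegral_mono fun y => ENNReal.rpow_le_rpow ?_ hs0
  rw [← ofReal_norm]
  exact ENNReal.ofReal_le_ofReal (hB y)

/-- Pointwise domination of `(M_{n'} f)^q = M(|f|^{n'})^r` by the fractional maximal function of
the gradient and by the level sets of the potentials of the gradients of dyadic truncations. -/
lemma exists_pointwise {p q pp r : ℝ} (hE : Expo n p q pp r) : ∃ C l : ℝ≥0∞, C ≠ ∞ ∧ l ≠ 0 ∧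
    l ≠ ∞ ∧ ∀ f : (Fin n → ℝ) → ℝ, ContDiff ℝ 1 f → HasCompactSupport f → ∀ x : Fin n → ℝ,
      MC volume (fun y => ‖f y‖ₑ ^ ((n : ℝ) / (n - 1))) x ^ r ≤
        C * M1 (fun y => ‖fderiv ℝ f y‖ₑ) x ^ q +
        ∑' k : ℤ, {x | l < J1 (fun y => ‖fderiv ℝ (fun y => trunc ((2 : ℝ) ^ (-k) * f y)) y‖ₑ)
          x}.indicator (fun _ => ((2 : ℝ≥0∞) ^ (k + 2)) ^ q) x := by
  obtain ⟨C0, hC0, hL⟩ := exists_trunc_max n hE.hn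
  have hn' : (2 : ℝ) ≤ n := by exact_mod_cast hE.hn
  have hn1 : (0 : ℝ) < n - 1 := by linarith
  have hn0 : (0 : ℝ) < n := by linarith
  have hq0 : 0 < q := by linarith [hE.hp, hE.hpq]
  have hr0 : 0 < r := by linarith [hE.hr]
  set s : ℝ := (n : ℝ) / (n - 1) with hs
  have hs0 : 0 < s := by positivity
  have hsr : s * r = q := by
    rw [hE.rq, hs]; field_simp
  set C1 : ℝ≥0∞ := (2 * C0) ^ n * (2 * ENNReal.ofReal (4 ^ n)) with hC1
  have hC1t : C1 ≠ ∞ := by finiteness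
  refine ⟨(8 * C0) ^ q, (2 * (C1 + 1))⁻¹, by finiteness, ?_, ?_, fun f hf hfs x => ?_⟩
  · exact ENNReal.inv_ne_zero.2 (by finiteness)
  · exact ENNReal.inv_ne_top.2 (by simp)
  set A := MC volume (fun y => ‖f y‖ₑ ^ s) x with hA
  have hAt : A ≠ ∞ := MC_enorm_ne_top hf.continuous hfs hs0.le x
  rcases eq_or_ne A 0 with hA0 | hA0
  · rw [hA0, ENNReal.zero_rpow_of_pos hr0]; exact bot_le
  obtain ⟨m, hm1, hm2⟩ := ENNReal.exists_mem_Ioc_zpow hA0 hAt (y := (2 : ℝ≥0∞) ^ s)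
    (ENNReal.one_lt_rpow (by simp) hs0) (by finiteness)
  have hzs : ∀ j : ℤ, ((2 : ℝ≥0∞) ^ s) ^ j = ((2 : ℝ≥0∞) ^ j) ^ s := by
    intro j
    rw [← ENNReal.rpow_intCast, ← ENNReal.rpow_mul, two_zpow_rpow, mul_comm]
  rw [hzs] at hm1 hm2
  obtain ⟨k, rfl⟩ : ∃ k : ℤ, m = k + 1 := ⟨m - 1, by ring⟩
  rw [show k + 1 + 1 = k + 2 by ring] at hm2
  have hAr : A ^ r ≤ ((2 : ℝ≥0∞) ^ (k + 2)) ^ q := by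
    rw [← hsr, ENNReal.rpow_mul]
    exact ENNReal.rpow_le_rpow hm2 hr0.le
  have hl : ContDiff ℝ 1 (fun t : ℝ => (2 : ℝ) ^ (-k) * t) := by fun_prop
  have hF : ContDiff ℝ 1 (fun y => (2 : ℝ) ^ (-k) * f y) := hl.comp hf
  have hFe : ∀ y, ‖(2 : ℝ) ^ (-k) * f y‖ₑ = (2 : ℝ≥0∞) ^ (-k) * ‖f y‖ₑ := by
    intro y
    rw [enorm_mul, ← ofReal_norm, Real.norm_of_nonneg (by positivity), ofReal_two_zpow]
  have hMF : MC volume (fun y => ‖(2 : ℝ) ^ (-k) * f y‖ₑ ^ s) x = ((2 : ℝ≥0∞) ^ (-k)) ^ s * A := by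
    have : (fun y => ‖(2 : ℝ) ^ (-k) * f y‖ₑ ^ s) =
        fun y => ((2 : ℝ≥0∞) ^ (-k)) ^ s * ‖f y‖ₑ ^ s := by
      funext y; rw [hFe, ENNReal.mul_rpow_of_nonneg _ _ hs0.le]
    rw [this, MC_const_mul _ _ (ENNReal.rpow_ne_top_of_nonneg hs0.le (two_zpow_ne_top _))]
  have hGF : M1 (fun y => ‖fderiv ℝ (fun y => (2 : ℝ) ^ (-k) * f y) y‖ₑ) x =
      (2 : ℝ≥0∞) ^ (-k) * M1 (fun y => ‖fderiv ℝ f y‖ₑ) x := by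
    rw [← M1_const_mul _ (two_zpow_ne_top _)]
    congr 1
    funext y
    have hd : deriv (fun t : ℝ => (2 : ℝ) ^ (-k) * t) (f y) = 2 ^ (-k) := by simp
    rw [enorm_fderiv_comp hl hf, hd, abs_of_pos (by positivity : (0 : ℝ) < 2 ^ (-k)),
      ofReal_two_zpow]
  have hz2 : ∀ j : ℤ, (2 : ℝ≥0∞) ^ (k + j) = 2 ^ k * 2 ^ j := fun j =>
    ENNReal.zpow_add (by simp) (by simp) _ _
  have hcancel : ∀ j : ℤ, ((2 : ℝ≥0∞) ^ (-k)) ^ s * ((2 : ℝ≥0∞) ^ (k + j)) ^ s =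
      ((2 : ℝ≥0∞) ^ j) ^ s := by
    intro j
    rw [← ENNReal.mul_rpow_of_nonneg _ _ hs0.le, hz2, ← mul_assoc, two_zpow_neg_mul, one_mul]
  have hb0 : ((2 : ℝ≥0∞) ^ (-k)) ^ s ≠ 0 :=
    (ENNReal.rpow_pos (ENNReal.zpow_pos (by simp) (by simp) _) (two_zpow_ne_top _)).ne'
  have hbt : ((2 : ℝ≥0∞) ^ (-k)) ^ s ≠ ∞ :=
    ENNReal.rpow_ne_top_of_nonneg hs0.le (two_zpow_ne_top _)
  have key := hL _ hF x (by
    rw [hMF]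
    calc (2 : ℝ≥0∞) ^ s = ((2 : ℝ≥0∞) ^ (1 : ℤ)) ^ s := by simp
      _ = _ := (hcancel 1).symm
      _ < _ := (ENNReal.mul_lt_mul_iff_right hb0 hbt).2 hm1) (by
    rw [hMF]
    calc _ ≤ _ := mul_le_mul_right hm2 _
      _ = ((2 : ℝ≥0∞) ^ (2 : ℤ)) ^ s := hcancel 2
      _ = 4 ^ s := by congr 1; rw [zpow_ofNat]; norm_num)
  rw [hGF, mul_add] at key
  set M := M1 (fun y => ‖fderiv ℝ f y‖ₑ) x with hM
  set T := MC volume (fun y => ‖trunc ((2 : ℝ) ^ (-k) * f y)‖ₑ) x with hT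
  rcases le_or_gt 2⁻¹ (C0 * (2 ^ (-k) * M)) with h1 | h1
  · refine le_trans (hAr.trans ?_) le_self_add
    rw [← ENNReal.mul_rpow_of_nonneg _ _ hq0.le]
    refine ENNReal.rpow_le_rpow ?_ hq0.le
    have e8 : (2 : ℝ≥0∞) ^ (k + 2) = 8 * 2 ^ k * 2⁻¹ := by
      rw [hz2]
      have : (8 : ℝ≥0∞) * 2⁻¹ = 2 ^ (2 : ℤ) := by
        rw [zpow_ofNat, show (8 : ℝ≥0∞) = 2 ^ 2 * 2 by norm_num, mul_assoc,
          ENNReal.mul_inv_cancel (by simp) (by simp), mul_one]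
      rw [← this]; ring
    calc (2 : ℝ≥0∞) ^ (k + 2) = 8 * 2 ^ k * 2⁻¹ := e8
      _ ≤ 8 * 2 ^ k * (C0 * (2 ^ (-k) * M)) := mul_le_mul_right h1 _
      _ = 8 * C0 * M * (2 ^ (-k) * 2 ^ k) := by ring
      _ = 8 * C0 * M := by rw [two_zpow_neg_mul, mul_one]
  · have h2 : 2⁻¹ ≤ C0 * T ^ (1 / (n : ℝ)) := by
      by_contra h3
      have := ENNReal.add_lt_add h1 (not_le.1 h3)
      rw [ENNReal.inv_two_add_inv_two] at this
      exact absurd key (not_le.2 this)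
    refine le_trans ?_ le_add_self
    refine le_trans ?_ (ENNReal.le_tsum k)
    rw [indicator_of_mem]
    · exact hAr
    rw [mem_ofPred_eq]
    by_contra h3
    rw [not_lt] at h3
    have h4 : 1 ≤ (2 * C0) ^ n * T := by
      have h5 : 1 ≤ 2 * C0 * T ^ (1 / (n : ℝ)) := by
        calc (1 : ℝ≥0∞) = 2 * 2⁻¹ := (ENNReal.mul_inv_cancel (by simp) (by simp)).symm
          _ ≤ 2 * (C0 * T ^ (1 / (n : ℝ))) := mul_le_mul_right h2 _
          _ = _ := by ring
      calc (1 : ℝ≥0∞) = 1 ^ n := (one_pow n).symm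
        _ ≤ (2 * C0 * T ^ (1 / (n : ℝ))) ^ n := by gcongr
        _ = (2 * C0) ^ n * T := by
            rw [mul_pow, ← ENNReal.rpow_natCast (T ^ (1 / (n : ℝ))), ← ENNReal.rpow_mul,
              one_div_mul_cancel hn0.ne', ENNReal.rpow_one]
    have hTc : ContDiff ℝ 1 (fun y => trunc ((2 : ℝ) ^ (-k) * f y)) := trunc_contDiff.comp hF
    have hTs : HasCompactSupport (fun y => trunc ((2 : ℝ) ^ (-k) * f y)) :=
      hfs.comp_left (g := fun t => trunc ((2 : ℝ) ^ (-k) * t)) (trunc_zero (by simp))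
    have h6 := MC_le_J1 (by linarith [hE.hn]) hTc hTs x
    have h7 : (1 : ℝ≥0∞) ≤ 2⁻¹ := by
      calc (1 : ℝ≥0∞) ≤ (2 * C0) ^ n * T := h4
        _ ≤ (2 * C0) ^ n * (2 * ENNReal.ofReal (4 ^ n) * (2 * (C1 + 1))⁻¹) := by
            refine mul_le_mul_right (h6.trans ?_) _
            exact mul_le_mul_right h3 _
        _ = C1 * (2 * (C1 + 1))⁻¹ := by rw [hC1]; ring
        _ ≤ (C1 + 1) * (2 * (C1 + 1))⁻¹ := mul_le_mul_left le_self_add _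
        _ = 2⁻¹ := by
            rw [ENNReal.mul_inv (Or.inl (by simp)) (Or.inl (by simp)), mul_left_comm,
              ENNReal.mul_inv_cancel (by simp) (by simp [hC1t]), mul_one]
    exact absurd h7 (not_le.2 (ENNReal.inv_lt_one.2 (by norm_num)))

/-- The level sets carrying the gradients of the dyadic truncations are disjoint, and `q/p ≥ 1`,
so the weak type estimates for the pieces sum up. -/
lemma exists_tsum_bound {p q pp r : ℝ} (hE : Expo n p q pp r) {l : ℝ≥0∞} (hl0 : l ≠ 0)
    (hlt : l ≠ ∞) : ∃ C : ℝ≥0∞, C ≠ ∞ ∧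
    ∀ K w, Wt n q pp r K w → ∀ f : (Fin n → ℝ) → ℝ, ContDiff ℝ 1 f →
      ∑' k : ℤ, ((2 : ℝ≥0∞) ^ (k + 2)) ^ q * ∫⁻ x in
        {x | l < J1 (fun y => ‖fderiv ℝ (fun y => trunc ((2 : ℝ) ^ (-k) * f y)) y‖ₑ) x}, w x ^ q ≤
        C * K ^ r * (∫⁻ x, (w x * ‖fderiv ℝ f x‖ₑ) ^ p) ^ (q / p) := by
  obtain ⟨C1, hC1, hweak⟩ := exists_weak_J1 hE
  obtain ⟨C2, hC2, htr⟩ := exists_fderiv_trunc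
  have hp0 : 0 < p := by linarith [hE.hp]
  have hq0 : 0 < q := by linarith [hE.hp, hE.hpq]
  have hlq0 : l ^ q ≠ 0 := (ENNReal.rpow_pos (pos_iff_ne_zero.2 hl0) hlt).ne'
  have hlqt : l ^ q ≠ ∞ := by finiteness
  refine ⟨(l ^ q)⁻¹ * C1 * (4 * C2) ^ q, ?_, fun K w hw f hf => ?_⟩
  · have := ENNReal.inv_ne_top.2 hlq0
    finiteness
  set S : ℤ → Set (Fin n → ℝ) := fun k =>
    {y | 1 / 4 < |(2 : ℝ) ^ (-k) * f y| ∧ |(2 : ℝ) ^ (-k) * f y| < 1 / 2} with hS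
  have hfc : Continuous f := hf.continuous
  have hSm : ∀ k, MeasurableSet (S k) := by
    intro k
    have hc : Continuous fun y => |(2 : ℝ) ^ (-k) * f y| := by fun_prop
    exact ((isOpen_lt continuous_const hc).inter (isOpen_lt hc continuous_const)).measurableSet
  have hSd : Pairwise (Function.onFun Disjoint S) := by
    have key : ∀ j k : ℤ, j < k → Disjoint (S j) (S k) := by
      intro j k hjk
      rw [Set.disjoint_left]
      rintro y ⟨-, h1⟩ ⟨h2, -⟩
      rw [abs_mul, abs_of_pos (by positivity)] at h1 h2
      have h3 : (2 : ℝ) ^ (-j) ≥ 2 * 2 ^ (-k) := by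
        calc (2 : ℝ) * 2 ^ (-k) = 2 ^ (1 + -k) := by rw [zpow_add₀ (by norm_num), zpow_one]
          _ ≤ 2 ^ (-j) := zpow_le_zpow_right₀ (by norm_num) (by omega)
      nlinarith [abs_nonneg (f y)]
    intro j k hjk
    rcases lt_or_gt_of_ne hjk with h | h
    · exact key j k h
    · exact (key k j h).symm
  have hgm : Measurable fun y => ‖fderiv ℝ f y‖ₑ :=
    (hf.continuous_fderiv (by norm_num)).measurable.enorm
  set g : (Fin n → ℝ) → ℝ≥0∞ := fun x => (w x * ‖fderiv ℝ f x‖ₑ) ^ p with hg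
  have hgm' : Measurable g := (hw.meas.mul hgm).pow_const _
  have hterm : ∀ k : ℤ, ((2 : ℝ≥0∞) ^ (k + 2)) ^ q * ∫⁻ x in
      {x | l < J1 (fun y => ‖fderiv ℝ (fun y => trunc ((2 : ℝ) ^ (-k) * f y)) y‖ₑ) x}, w x ^ q ≤
      (l ^ q)⁻¹ * C1 * (4 * C2) ^ q * K ^ r * (∫⁻ x in S k, g x) ^ (q / p) := by
    intro k
    have hF : ContDiff ℝ 1 (fun y => (2 : ℝ) ^ (-k) * f y) := contDiff_const.mul hf
    have hTc : ContDiff ℝ 1 (fun y => trunc ((2 : ℝ) ^ (-k) * f y)) := trunc_contDiff.comp hF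
    have hTm : Measurable fun y => ‖fderiv ℝ (fun y => trunc ((2 : ℝ) ^ (-k) * f y)) y‖ₑ :=
      (hTc.continuous_fderiv (by norm_num)).measurable.enorm
    have h1 := hweak K w hw _ hTm l
    set W := ∫⁻ x in
      {x | l < J1 (fun y => ‖fderiv ℝ (fun y => trunc ((2 : ℝ) ^ (-k) * f y)) y‖ₑ) x}, w x ^ q
    have h2 : ∫⁻ x, (w x * ‖fderiv ℝ (fun y => trunc ((2 : ℝ) ^ (-k) * f y)) x‖ₑ) ^ p ≤
        (C2 * 2 ^ (-k)) ^ p * ∫⁻ x in S k, g x := by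
      rw [← lintegral_indicator (hSm k), ← lintegral_const_mul _ (hgm'.indicator (hSm k))]
      refine lintegral_mono fun x => ?_
      have h3 := htr n f hf k x
      by_cases hx : x ∈ S k
      · rw [indicator_of_mem hx] at h3 ⊢
        rw [hg, ← ENNReal.mul_rpow_of_nonneg _ _ hp0.le]
        refine ENNReal.rpow_le_rpow ?_ hp0.le
        calc _ ≤ w x * (C2 * 2 ^ (-k) * ‖fderiv ℝ f x‖ₑ) := mul_le_mul_right h3 _
          _ = _ := by ring
      · rw [indicator_of_notMem hx] at h3
        rw [nonpos_iff_eq_zero.1 h3, mul_zero, ENNReal.zero_rpow_of_pos hp0]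
        exact bot_le
    have h4 : (∫⁻ x, (w x * ‖fderiv ℝ (fun y => trunc ((2 : ℝ) ^ (-k) * f y)) x‖ₑ) ^ p) ^ (q / p) ≤
        (C2 * 2 ^ (-k)) ^ q * (∫⁻ x in S k, g x) ^ (q / p) := by
      refine (ENNReal.rpow_le_rpow h2 (by positivity)).trans (le_of_eq ?_)
      rw [ENNReal.mul_rpow_of_nonneg _ _ (by positivity), ← ENNReal.rpow_mul,
        mul_div_cancel₀ _ hp0.ne']
    have h5 : W ≤ (l ^ q)⁻¹ * (C1 * K ^ r *
        ((C2 * 2 ^ (-k)) ^ q * (∫⁻ x in S k, g x) ^ (q / p))) := by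
      calc W = (l ^ q)⁻¹ * (l ^ q * W) := by
            rw [← mul_assoc, ENNReal.inv_mul_cancel hlq0 hlqt, one_mul]
        _ ≤ _ := mul_le_mul_right (h1.trans (mul_le_mul_right h4 _)) _
    have h6 : ((2 : ℝ≥0∞) ^ (k + 2)) ^ q * (C2 * 2 ^ (-k)) ^ q = (4 * C2) ^ q := by
      rw [← ENNReal.mul_rpow_of_nonneg _ _ hq0.le, ENNReal.zpow_add (by simp) (by simp)]
      congr 1
      calc (2 : ℝ≥0∞) ^ k * 2 ^ (2 : ℤ) * (C2 * 2 ^ (-k)) =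
            (2 ^ (-k) * 2 ^ k) * (2 ^ (2 : ℤ) * C2) := by ring
        _ = _ := by rw [two_zpow_neg_mul, one_mul, zpow_ofNat]; norm_num
    calc _ ≤ _ := mul_le_mul_right h5 _
      _ = (l ^ q)⁻¹ * C1 * (((2 : ℝ≥0∞) ^ (k + 2)) ^ q * (C2 * 2 ^ (-k)) ^ q) * K ^ r *
          (∫⁻ x in S k, g x) ^ (q / p) := by ring
      _ = _ := by rw [h6]
  calc _ ≤ ∑' k : ℤ, (l ^ q)⁻¹ * C1 * (4 * C2) ^ q * K ^ r * (∫⁻ x in S k, g x) ^ (q / p) :=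
        ENNReal.tsum_le_tsum hterm
    _ = (l ^ q)⁻¹ * C1 * (4 * C2) ^ q * K ^ r * ∑' k : ℤ, (∫⁻ x in S k, g x) ^ (q / p) :=
        ENNReal.tsum_mul_left
    _ ≤ (l ^ q)⁻¹ * C1 * (4 * C2) ^ q * K ^ r * (∑' k : ℤ, ∫⁻ x in S k, g x) ^ (q / p) :=
        mul_le_mul_right (tsum_rpow_le _ ((one_le_div hp0).2 hE.hpq)) _
    _ ≤ _ := by
        refine mul_le_mul_right (ENNReal.rpow_le_rpow ?_ (by positivity)) _
        rw [← lintegral_iUnion hSm hSd]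
        exact setLIntegral_le_lintegral _ _

/-- The weighted inequality for the centred maximal function over sup-norm balls. -/
lemma exists_main {p q pp r : ℝ} (hE : Expo n p q pp r) : ∃ C : ℝ≥0∞, C ≠ ∞ ∧
    ∀ K w, Wt n q pp r K w → 1 ≤ K → ∀ f : (Fin n → ℝ) → ℝ, ContDiff ℝ 1 f →
      HasCompactSupport f →
      ∫⁻ x, MC volume (fun y => ‖f y‖ₑ ^ ((n : ℝ) / (n - 1))) x ^ r * w x ^ q ≤
        C * K ^ (max r (r / (r - 1))) * (∫⁻ x, (w x * ‖fderiv ℝ f x‖ₑ) ^ p) ^ (q / p) := by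
  obtain ⟨C0, l, hC0, hl0, hlt, hpt⟩ := exists_pointwise hE
  obtain ⟨C1, hC1, hM⟩ := exists_M1_bound hE
  obtain ⟨C2, hC2, hJ⟩ := exists_tsum_bound hE hl0 hlt
  refine ⟨C0 * C1 + C2, by finiteness, fun K w hw hK f hf hfs => ?_⟩
  have hgm : Measurable fun y => ‖fderiv ℝ f y‖ₑ :=
    (hf.continuous_fderiv (by norm_num)).measurable.enorm
  set Ω : ℤ → Set (Fin n → ℝ) := fun k =>
    {x | l < J1 (fun y => ‖fderiv ℝ (fun y => trunc ((2 : ℝ) ^ (-k) * f y)) y‖ₑ) x} with hΩ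
  have hΩm : ∀ k, MeasurableSet (Ω k) := by
    intro k
    have hF : ContDiff ℝ 1 (fun y => (2 : ℝ) ^ (-k) * f y) := contDiff_const.mul hf
    have hTc : ContDiff ℝ 1 (fun y => trunc ((2 : ℝ) ^ (-k) * f y)) := trunc_contDiff.comp hF
    have hTm : Measurable fun y => ‖fderiv ℝ (fun y => trunc ((2 : ℝ) ^ (-k) * f y)) y‖ₑ :=
      (hTc.continuous_fderiv (by norm_num)).measurable.enorm
    exact measurableSet_lt measurable_const (measurable_J1 hTm)
  have hwq : Measurable fun x => w x ^ q := hw.meas.pow_const _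
  set M : (Fin n → ℝ) → ℝ≥0∞ := M1 fun y => ‖fderiv ℝ f y‖ₑ with hMd
  set N := (∫⁻ x, (w x * ‖fderiv ℝ f x‖ₑ) ^ p) ^ (q / p) with hN
  have hterm : ∀ k, Measurable fun x =>
      (Ω k).indicator (fun x => ((2 : ℝ≥0∞) ^ (k + 2)) ^ q * w x ^ q) x := fun k =>
    (hwq.const_mul _).indicator (hΩm k)
  have hsm : Measurable fun x => ∑' k : ℤ,
      (Ω k).indicator (fun x => ((2 : ℝ≥0∞) ^ (k + 2)) ^ q * w x ^ q) x := Measurable.tsum hterm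
  calc ∫⁻ x, MC volume (fun y => ‖f y‖ₑ ^ ((n : ℝ) / (n - 1))) x ^ r * w x ^ q
      ≤ ∫⁻ x, (C0 * (M x ^ q * w x ^ q) + ∑' k : ℤ,
          (Ω k).indicator (fun x => ((2 : ℝ≥0∞) ^ (k + 2)) ^ q * w x ^ q) x) := by
        refine lintegral_mono fun x => ?_
        refine (mul_le_mul_left (hpt f hf hfs x) _).trans (le_of_eq ?_)
        rw [add_mul, mul_assoc, ← ENNReal.tsum_mul_right]
        congr 1
        refine tsum_congr fun k => ?_
        by_cases hx : x ∈ Ω k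
        · rw [indicator_of_mem hx, indicator_of_mem hx]
        · rw [indicator_of_notMem hx, indicator_of_notMem hx, zero_mul]
    _ = C0 * (∫⁻ x, M x ^ q * w x ^ q) +
          ∑' k : ℤ, ((2 : ℝ≥0∞) ^ (k + 2)) ^ q * ∫⁻ x in Ω k, w x ^ q := by
        rw [lintegral_add_right _ hsm, lintegral_const_mul' _ _ hC0,
          lintegral_tsum fun k => (hterm k).aemeasurable]
        congr 1
        refine tsum_congr fun k => ?_
        rw [lintegral_indicator (hΩm k), lintegral_const_mul _ hwq]
    _ ≤ C0 * (C1 * K ^ (r / (r - 1)) * N) + C2 * K ^ r * N :=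
        add_le_add (mul_le_mul_right (hM K w hw _ hgm) _) (hJ K w hw f hf)
    _ ≤ C0 * (C1 * K ^ (max r (r / (r - 1))) * N) + C2 * K ^ (max r (r / (r - 1))) * N := by
        gcongr
        · exact le_max_right _ _
        · exact le_max_left _ _
    _ = _ := by ring

/-! ### Regularising the weight -/

/-- The `A_{p,q}` constant is at least `1`, by Hölder's inequality. -/
lemma Wt.one_le {p q pp r : ℝ} (hE : Expo n p q pp r) {K : ℝ≥0∞}
    {w : (Fin n → ℝ) → ℝ≥0∞} (hw : Wt n q pp r K w) : 1 ≤ K := by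
  have hr := hE.hr
  have hr0 : 0 < r := by linarith
  have hr1 : 0 < r - 1 := by linarith
  set B := Metric.closedBall (0 : Fin n → ℝ) 1 with hB
  have hV0 : volume B ≠ 0 := vol_ball_ne_zero _ one_pos
  have hVt : volume B ≠ ∞ := vol_ball_ne_top _ one_pos
  have hconj : Real.HolderConjugate r (r / (r - 1)) := Real.HolderConjugate.conjExponent hr
  have h1 : volume B ≤ (∫⁻ y in B, w y ^ q) ^ (1 / r) *
      (∫⁻ y in B, w y ^ (-pp)) ^ (1 / (r / (r - 1))) := by
    calc volume B = ∫⁻ y in B, w y ^ (q / r) * w y ^ (-(q / r)) := by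
          rw [← setLIntegral_one]
          refine lintegral_congr fun y => ?_
          rw [← ENNReal.rpow_add _ _ (hw.ne_zero y) (hw.ne_top y), add_neg_cancel,
            ENNReal.rpow_zero]
      _ ≤ _ := ENNReal.lintegral_mul_le_Lp_mul_Lq _ hconj (hw.meas.pow_const _).aemeasurable
            (hw.meas.pow_const _).aemeasurable
      _ = _ := by
          congr 3
          · funext y
            rw [← ENNReal.rpow_mul, div_mul_cancel₀ _ hr0.ne']
          · funext y
            rw [← ENNReal.rpow_mul]
            congr 1
            rw [hE.qpp]; field_simp
  have h2 : volume B ^ r ≤ K * volume B ^ r := by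
    calc volume B ^ r ≤ _ := ENNReal.rpow_le_rpow h1 hr0.le
      _ = (∫⁻ y in B, w y ^ q) * (∫⁻ y in B, w y ^ (-pp)) ^ (r - 1) := by
          rw [ENNReal.mul_rpow_of_nonneg _ _ hr0.le, ← ENNReal.rpow_mul, ← ENNReal.rpow_mul,
            one_div_mul_cancel hr0.ne', ENNReal.rpow_one]
          congr 2
          field_simp
      _ ≤ _ := hw.bound 0 1 one_pos
  have h3 : 1 * volume B ^ r ≤ K * volume B ^ r := by rwa [one_mul]
  exact (ENNReal.mul_le_mul_iff_left (ENNReal.rpow_pos (pos_iff_ne_zero.2 hV0) hVt).ne'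
    (ENNReal.rpow_ne_top_of_nonneg hr0.le hVt)).1 h3

/-- A weight with finite `A_{p,q}` constant either vanishes almost everywhere or agrees almost
everywhere with a measurable weight taking values in `(0, ∞)`: if it is not null on some ball, the
`A_{p,q}` condition makes `v^{-pp}` integrable on all larger balls. -/
lemma exists_Wt {p q pp r : ℝ} (hE : Expo n p q pp r) {K : ℝ≥0∞} (hK : K ≠ ∞)
    {v : (Fin n → ℝ) → ℝ≥0∞} (hv : AEMeasurable v) (hvt : ∀ x, v x ≠ ∞)
    (hb : ∀ x t, 0 < t → (∫⁻ y in Metric.closedBall x t, v y ^ q) *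
      (∫⁻ y in Metric.closedBall x t, v y ^ (-pp)) ^ (r - 1) ≤
        K * volume (Metric.closedBall x t) ^ r) :
    (∀ᵐ x, v x = 0) ∨ ∃ w, (∀ᵐ x, w x = v x) ∧ Wt n q pp r K w := by
  have hr := hE.hr
  have hr1 : 0 < r - 1 := by linarith
  have hpp := hE.hpp
  have hq0 : 0 < q := by linarith [hE.hp, hE.hpq]
  by_cases hz : ∀ m : ℕ, ∫⁻ y in Metric.closedBall (0 : Fin n → ℝ) (m + 1), v y ^ q = 0
  · left
    have h1 : ∀ m : ℕ, ∀ᵐ x, x ∈ Metric.closedBall (0 : Fin n → ℝ) (m + 1) → v x = 0 := by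
      intro m
      have h2 := (lintegral_eq_zero_iff' (hv.pow_const q).restrict).1 (hz m)
      rw [EventuallyEq, ae_restrict_iff' measurableSet_closedBall] at h2
      filter_upwards [h2] with x hx hxm
      have h3 := hx hxm
      simpa [ENNReal.rpow_eq_zero_iff, hq0, hq0.not_gt] using h3
    filter_upwards [ae_all_iff.2 h1] with x hx
    obtain ⟨m, hm⟩ := exists_nat_ge ‖x‖
    exact hx m (by rw [mem_closedBall_zero_iff]; linarith)
  right
  push Not at hz
  obtain ⟨m₀, hm₀⟩ := hz
  have h1 : ∀ m : ℕ, ∀ᵐ x, x ∈ Metric.closedBall (0 : Fin n → ℝ) (m + 1) → v x ≠ 0 := by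
    intro m
    set M : ℕ := max m m₀ with hM
    have hsub : Metric.closedBall (0 : Fin n → ℝ) (m₀ + 1) ⊆
        Metric.closedBall (0 : Fin n → ℝ) (M + 1) :=
      Metric.closedBall_subset_closedBall (by simp [hM])
    have hsub' : Metric.closedBall (0 : Fin n → ℝ) (m + 1) ⊆
        Metric.closedBall (0 : Fin n → ℝ) (M + 1) :=
      Metric.closedBall_subset_closedBall (by simp [hM])
    have h2 : ∫⁻ y in Metric.closedBall (0 : Fin n → ℝ) (M + 1), v y ^ q ≠ 0 := fun h3 =>
      hm₀ (nonpos_iff_eq_zero.1 (h3 ▸ lintegral_mono_set hsub))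
    have hpos : (0 : ℝ) < M + 1 := by positivity
    have h4 := hb 0 (M + 1) hpos
    have h5 : ∫⁻ y in Metric.closedBall (0 : Fin n → ℝ) (M + 1), v y ^ (-pp) ≠ ∞ := by
      intro h6
      rw [h6, ENNReal.top_rpow_of_pos hr1, ENNReal.mul_top h2, top_le_iff] at h4
      exact ENNReal.mul_ne_top hK (ENNReal.rpow_ne_top_of_nonneg (by linarith)
        (vol_ball_ne_top _ hpos)) h4
    have h7 := ae_lt_top' (hv.pow_const (-pp)).restrict h5
    rw [ae_restrict_iff' measurableSet_closedBall] at h7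
    filter_upwards [h7] with x hx hxm h0
    have h8 := hx (hsub' hxm)
    rw [h0, ENNReal.zero_rpow_of_neg (by linarith)] at h8
    exact lt_irrefl _ h8
  have h0 : ∀ᵐ x, v x ≠ 0 := by
    filter_upwards [ae_all_iff.2 h1] with x hx
    obtain ⟨m, hm⟩ := exists_nat_ge ‖x‖
    exact hx m (by rw [mem_closedBall_zero_iff]; linarith)
  classical
  set u := hv.mk v with hu
  have hum : Measurable u := hv.measurable_mk
  set w : (Fin n → ℝ) → ℝ≥0∞ := fun x => if u x = 0 ∨ u x = ∞ then 1 else u x with hw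
  have hS : MeasurableSet {x | u x = 0 ∨ u x = ∞} :=
    (hum (measurableSet_singleton 0)).union (hum (measurableSet_singleton ∞))
  have hwv : ∀ᵐ x, w x = v x := by
    filter_upwards [h0, hv.ae_eq_mk] with x hx1 hx2
    rw [hw]
    dsimp only
    rw [show u x = v x from hx2.symm, if_neg]
    exact fun h => h.elim hx1 (hvt x)
  refine ⟨w, hwv, ⟨Measurable.ite hS measurable_const hum, fun x => ?_, fun x => ?_, hK,
    fun x t ht => ?_⟩⟩
  · rw [hw]; dsimp only; split_ifs with h
    · exact one_ne_zero
    · exact fun h' => h (Or.inl h')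
  · rw [hw]; dsimp only; split_ifs with h
    · exact one_ne_top
    · exact fun h' => h (Or.inr h')
  · have e : ∀ a : ℝ, ∫⁻ y in Metric.closedBall x t, w y ^ a =
        ∫⁻ y in Metric.closedBall x t, v y ^ a := by
      intro a
      refine lintegral_congr_ae (ae_restrict_of_ae ?_)
      filter_upwards [hwv] with y hy
      rw [hy]
    rw [e, e]
    exact hb x t ht

/-! ### Transfer to Euclidean space -/

lemma cube_preimage (a : En n) {h : ℝ} (hh : 0 < h) :
    (WithLp.toLp 2 : (Fin n → ℝ) → En n) ⁻¹' cube a h =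
      Metric.closedBall (fun i => a i + h / 2) (h / 2) := by
  ext y
  rw [mem_preimage, Metric.mem_closedBall, dist_pi_le_iff (by positivity)]
  refine forall_congr' fun i => ?_
  rw [Real.dist_eq, abs_le]
  change a i ≤ y i ∧ y i ≤ a i + h ↔ _
  constructor
  · rintro ⟨h1, h2⟩; constructor <;> linarith
  · rintro ⟨h1, h2⟩; constructor <;> linarith

lemma toLp_emb : MeasurableEmbedding (WithLp.toLp 2 : (Fin n → ℝ) → En n) :=
  (MeasurableEquiv.toLp 2 (Fin n → ℝ)).measurableEmbedding

lemma lintegral_En (g : En n → ℝ≥0∞) : ∫⁻ x, g x = ∫⁻ y : Fin n → ℝ, g (WithLp.toLp 2 y) :=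
  ((PiLp.volume_preserving_toLp (Fin n)).lintegral_comp_emb toLp_emb g).symm

lemma avgE_cube (g : En n → ℝ≥0∞) (a : En n) {h : ℝ} (hh : 0 < h) :
    avgE g (cube a h) =
      (∫⁻ y in Metric.closedBall (fun i => a i + h / 2) (h / 2), g (WithLp.toLp 2 y)) /
        volume (Metric.closedBall (fun i => a i + h / 2 : Fin n → ℝ) (h / 2)) := by
  have hp := PiLp.volume_preserving_toLp (Fin n)
  have h1 := hp.setLIntegral_comp_preimage_emb toLp_emb g (cube a h)
  have h2 := hp.measure_preimage_emb toLp_emb (cube a h)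
  rw [avgE, ← h1, ← h2, cube_preimage a hh, mul_comm, ENNReal.div_eq_inv_mul, mul_comm]

/-- A cube of side `h` containing `x` lies in the centred ball of dyadic radius in `[h, 2 h)`, whose
volume is at most `4^n` times larger. -/
lemma maximal_le (g : En n → ℝ≥0∞) (x : Fin n → ℝ) :
    maximal n g (WithLp.toLp 2 x) ≤
      ENNReal.ofReal (4 ^ n) * MC volume (fun y => g (WithLp.toLp 2 y)) x := by
  refine iSup_le fun a => iSup_le fun h => iSup_le fun hh => iSup_le fun hx => ?_
  rw [avgE_cube g a hh]
  set z : Fin n → ℝ := fun i => a i + h / 2 with hz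
  have hx' : x ∈ Metric.closedBall z (h / 2) := by rw [← cube_preimage a hh]; exact hx
  obtain ⟨m, hm1, hm2⟩ := exists_mem_Ioc_zpow hh (one_lt_two : (1 : ℝ) < 2)
  have hm3 : (2 : ℝ) ^ (m + 1) ≤ 4 * (h / 2) := by
    rw [zpow_add₀ (by norm_num), zpow_one]; linarith
  have hsub : Metric.closedBall z (h / 2) ⊆ Metric.closedBall x ((2 : ℝ) ^ (m + 1)) := by
    intro y hy
    rw [Metric.mem_closedBall] at *
    have := dist_triangle_right y x z
    linarith
  have hVt := vol_ball_ne_top x (zpow_pos (two_pos : (0 : ℝ) < 2) (m + 1))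
  refine ENNReal.div_le_of_le_mul ?_
  calc ∫⁻ y in Metric.closedBall z (h / 2), g (WithLp.toLp 2 y)
      ≤ ∫⁻ y in Metric.closedBall x ((2 : ℝ) ^ (m + 1)), g (WithLp.toLp 2 y) :=
        lintegral_mono_set hsub
    _ ≤ MC volume (fun y => g (WithLp.toLp 2 y)) x *
        volume (Metric.closedBall x ((2 : ℝ) ^ (m + 1))) := lintegral_ball_le_MC _ _ x _ hVt
    _ ≤ MC volume (fun y => g (WithLp.toLp 2 y)) x *
        volume (Metric.closedBall x (4 * (h / 2))) :=
        mul_le_mul_right (measure_mono (Metric.closedBall_subset_closedBall hm3)) _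
    _ = _ := by rw [vol_ball_mul x z (by positivity) (by norm_num)]; ring

/-- The `A_{p,q}` condition over cubes, as a condition over sup-norm balls without denominators. -/
lemma Apq_bound {p q pp r : ℝ} (hE : Expo n p q pp r) (w : En n → ℝ) (x : Fin n → ℝ) {t : ℝ}
    (ht : 0 < t) :
    (∫⁻ y in Metric.closedBall x t, ENNReal.ofReal (w (WithLp.toLp 2 y)) ^ q) *
      (∫⁻ y in Metric.closedBall x t, ENNReal.ofReal (w (WithLp.toLp 2 y)) ^ (-pp)) ^ (r - 1) ≤
        Apq n q pp w * volume (Metric.closedBall x t) ^ r := by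
  have hr := hE.hr
  have hpp := hE.hpp
  have e1 : q / pp = r - 1 := by rw [hE.qpp, mul_div_cancel_left₀ _ (by linarith)]
  set a : En n := WithLp.toLp 2 (fun i => x i - t) with ha
  have hz : (fun i => a i + 2 * t / 2 : Fin n → ℝ) = x := by
    funext i
    change x i - t + 2 * t / 2 = x i
    ring
  have h1 : avgE (fun x => ENNReal.ofReal (w x) ^ q) (cube a (2 * t)) *
      avgE (fun x => ENNReal.ofReal (w x) ^ (-pp)) (cube a (2 * t)) ^ (q / pp) ≤ Apq n q pp w :=
    le_iSup_of_le a (le_iSup_of_le (2 * t) (le_iSup_of_le (by positivity) le_rfl))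
  rw [avgE_cube _ _ (by positivity), avgE_cube _ _ (by positivity), hz, e1,
    show 2 * t / 2 = t by ring] at h1
  set V := volume (Metric.closedBall x t) with hV
  have hV0 : V ≠ 0 := vol_ball_ne_zero x ht
  have hVt : V ≠ ∞ := vol_ball_ne_top x ht
  set I := ∫⁻ y in Metric.closedBall x t, ENNReal.ofReal (w (WithLp.toLp 2 y)) ^ q
  set J := ∫⁻ y in Metric.closedBall x t, ENNReal.ofReal (w (WithLp.toLp 2 y)) ^ (-pp)
  calc I * J ^ (r - 1) = (V * (I / V)) * (V * (J / V)) ^ (r - 1) := by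
        rw [ENNReal.mul_div_cancel hV0 hVt, ENNReal.mul_div_cancel hV0 hVt]
    _ = (I / V * (J / V) ^ (r - 1)) * (V ^ (1 : ℝ) * V ^ (r - 1)) := by
        rw [ENNReal.mul_rpow_of_nonneg _ _ (by linarith), ENNReal.rpow_one]; ring
    _ = (I / V * (J / V) ^ (r - 1)) * V ^ r := by
        rw [← ENNReal.rpow_add _ _ hV0 hVt]; congr 2; ring
    _ ≤ _ := mul_le_mul_left h1 _

lemma expo_of {p : ℝ} (hn : 2 ≤ n) (hp : 1 < p) (hpn : p < n) :
    Expo n p (n * p / (n - p)) (p / (p - 1)) (n * p / (n - p) * ((n - 1) / n)) := by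
  have hn' : (2 : ℝ) ≤ n := by exact_mod_cast hn
  have h1 : (0 : ℝ) < n - p := by linarith
  have h2 : (0 : ℝ) < p - 1 := by linarith
  have h3 : (0 : ℝ) < n := by linarith
  have h4 : (0 : ℝ) < p := by linarith
  refine ⟨hn, hp, ?_, ?_, ?_, ?_, ?_, rfl, ?_⟩
  · rw [le_div_iff₀ h1]; nlinarith
  · rw [lt_div_iff₀ h2]; linarith
  · rw [div_mul_div_comm, lt_div_iff₀ (by positivity)]
    nlinarith [mul_pos (mul_pos h3 h3) h2]
  · field_simp; ring
  · field_simp; ring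
  · field_simp; ring

lemma exists_fderiv_toLp (n : ℕ) : ∃ C : ℝ≥0∞, C ≠ ∞ ∧ ∀ f : En n → ℝ, ContDiff ℝ 1 f →
    ∀ x : Fin n → ℝ, ‖fderiv ℝ (fun y : Fin n → ℝ => f (WithLp.toLp 2 y)) x‖ₑ ≤
      C * ENNReal.ofReal ‖fderiv ℝ f (WithLp.toLp 2 x)‖ := by
  set Λ : (Fin n → ℝ) →L[ℝ] En n :=
    (PiLp.continuousLinearEquiv 2 ℝ (fun _ : Fin n => ℝ)).symm.toContinuousLinearMap with hΛ
  refine ⟨ENNReal.ofReal ‖Λ‖, by simp, fun f hf x => ?_⟩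
  have h1 : HasFDerivAt (fun y : Fin n → ℝ => f (WithLp.toLp 2 y))
      ((fderiv ℝ f (WithLp.toLp 2 x)).comp Λ) x :=
    HasFDerivAt.comp (g := f) (f := Λ) x
      (hf.differentiable (by norm_num) (WithLp.toLp 2 x)).hasFDerivAt Λ.hasFDerivAt
  rw [h1.fderiv, ← ofReal_norm, ← ENNReal.ofReal_mul (norm_nonneg _), mul_comm]
  exact ENNReal.ofReal_le_ofReal (ContinuousLinearMap.opNorm_comp_le _ _)

end

/-- weighted Sobolev bound for `M_{n'}`, `1 < p < n`:
`‖w M_{n'}f‖_{L^{p*}} ≤ c [w]_{A_{p,p*}}^{(1/n') max{1, p'/p*}} ‖w |∇f|‖_{L^p}`,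
where `M_{n'}f = (M(|f|^{n'}))^{1/n'}`. -/
theorem statement10 (n : ℕ) (hn : 2 ≤ n) (p : ℝ) (hp : 1 < p) (hpn : p < n) :
    ∃ c : ℝ, 0 < c ∧ ∀ w : En n → ℝ, (∀ x, 0 ≤ w x) → LocallyIntegrable w volume →
      Apq n (n * p / (n - p)) (p / (p - 1)) w < ∞ →
      ∀ f : En n → ℝ, ContDiff ℝ (⊤ : ℕ∞) f → HasCompactSupport f →
        lpNorm (n * p / (n - p))
            (fun x => ENNReal.ofReal (w x) *
              maximal n (fun y => ENNReal.ofReal (|f y| ^ ((n : ℝ) / (n - 1)))) x ^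
                (((n : ℝ) - 1) / n)) volume ≤
          ENNReal.ofReal c *
            Apq n (n * p / (n - p)) (p / (p - 1)) w ^
              ((((n : ℝ) - 1) / n) * max 1 ((p / (p - 1)) / (n * p / (n - p)))) *
            lpNorm p (fun x => ENNReal.ofReal (w x) * ENNReal.ofReal ‖fderiv ℝ f x‖) volume := by
  have hn' : (2 : ℝ) ≤ n := by exact_mod_cast hn
  have hn1 : (0 : ℝ) < n - 1 := by linarith
  have hn0 : (0 : ℝ) < n := by linarith
  have hE := expo_of hn hp hpn
  obtain ⟨C, hC, hmain⟩ := exists_main hE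
  obtain ⟨L, hL, hfd⟩ := exists_fderiv_toLp n
  set q : ℝ := n * p / (n - p) with hq
  set pp : ℝ := p / (p - 1) with hpp
  set θ : ℝ := ((n : ℝ) - 1) / n with hθ
  set r : ℝ := q * θ with hr
  have hp0 : 0 < p := by linarith
  have hq0 : 0 < q := by linarith [hE.hpq]
  have hr1 : 0 < r - 1 := by linarith [hE.hr]
  have hr0 : 0 < r := by linarith
  have hθ0 : 0 < θ := by positivity
  set C' : ℝ≥0∞ := (ENNReal.ofReal (4 ^ n) ^ r * C) ^ (1 / q) * L with hC'
  have hC't : C' ≠ ∞ := by finiteness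
  refine ⟨C'.toReal + 1, by positivity, fun w hw0 hwl hA f hf hfs => ?_⟩
  set K := Apq n q pp w with hK
  set v : (Fin n → ℝ) → ℝ≥0∞ := fun y => ENNReal.ofReal (w (WithLp.toLp 2 y)) with hv
  have hvm : AEMeasurable v := by
    have h1 : AEMeasurable (fun x => ENNReal.ofReal (w x)) volume :=
      hwl.aestronglyMeasurable.aemeasurable.ennreal_ofReal
    exact h1.comp_quasiMeasurePreserving
      (PiLp.volume_preserving_toLp (Fin n)).quasiMeasurePreserving
  have hf1 : ContDiff ℝ 1 f := hf.of_le (by exact_mod_cast le_top)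
  set φ : (Fin n → ℝ) → ℝ := fun y => f (WithLp.toLp 2 y) with hφ
  have hφc : ContDiff ℝ 1 φ := hf1.comp (PiLp.contDiff_toLp)
  have hφs : HasCompactSupport φ := hfs.comp_homeomorph
    (PiLp.continuousLinearEquiv 2 ℝ (fun _ : Fin n => ℝ)).symm.toHomeomorph
  -- pass to the sup norm on `Fin n → ℝ` on both sides
  have hleft : lpNorm q (fun x => ENNReal.ofReal (w x) *
      maximal n (fun y => ENNReal.ofReal (|f y| ^ ((n : ℝ) / (n - 1)))) x ^ θ) volume ≤
      (ENNReal.ofReal (4 ^ n) ^ r *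
        ∫⁻ x, MC volume (fun y => ‖φ y‖ₑ ^ ((n : ℝ) / (n - 1))) x ^ r * v x ^ q) ^ (1 / q) := by
    rw [_root_.lpNorm, lintegral_En, ← lintegral_const_mul' _ _ (by finiteness)]
    refine ENNReal.rpow_le_rpow (lintegral_mono fun x => ?_) (by positivity)
    have h1 := maximal_le (fun y => ENNReal.ofReal (|f y| ^ ((n : ℝ) / (n - 1)))) x
    have h2 : (fun y : Fin n → ℝ =>
        ENNReal.ofReal (|f (WithLp.toLp 2 y)| ^ ((n : ℝ) / (n - 1)))) =
        fun y => ‖φ y‖ₑ ^ ((n : ℝ) / (n - 1)) := by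
      funext y
      rw [← ENNReal.ofReal_rpow_of_nonneg (abs_nonneg _) (by positivity), ← ofReal_norm,
        Real.norm_eq_abs]
    rw [h2] at h1
    calc _ ≤ (v x * (ENNReal.ofReal (4 ^ n) *
          MC volume (fun y => ‖φ y‖ₑ ^ ((n : ℝ) / (n - 1))) x) ^ θ) ^ q := by
          refine ENNReal.rpow_le_rpow ?_ hq0.le
          exact mul_le_mul_right (ENNReal.rpow_le_rpow h1 hθ0.le) _
      _ = _ := by
          rw [ENNReal.mul_rpow_of_nonneg _ _ hq0.le, ← ENNReal.rpow_mul,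
            ENNReal.mul_rpow_of_nonneg _ _ (by positivity), hr, mul_comm θ q]
          ring
  have hright : lpNorm p (fun x => ENNReal.ofReal (w x) * ENNReal.ofReal ‖fderiv ℝ f x‖) volume =
      (∫⁻ x, (v x * ENNReal.ofReal ‖fderiv ℝ f (WithLp.toLp 2 x)‖) ^ p) ^ (1 / p) := by
    rw [_root_.lpNorm, lintegral_En]
  rw [hright]
  refine hleft.trans ?_
  rcases exists_Wt hE hA.ne hvm (fun x => ENNReal.ofReal_ne_top)
    (fun x t ht => Apq_bound hE w x ht) with hz | ⟨u, huv, hu⟩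
  · have : ∫⁻ x, MC volume (fun y => ‖φ y‖ₑ ^ ((n : ℝ) / (n - 1))) x ^ r * v x ^ q = 0 := by
      rw [lintegral_congr_ae (g := fun _ => 0)]
      · simp
      · filter_upwards [hz] with x hx
        rw [hx, ENNReal.zero_rpow_of_pos hq0, mul_zero]
    rw [this, mul_zero, ENNReal.zero_rpow_of_pos (by positivity)]
    exact bot_le
  have e1 : ∫⁻ x, MC volume (fun y => ‖φ y‖ₑ ^ ((n : ℝ) / (n - 1))) x ^ r * v x ^ q =
      ∫⁻ x, MC volume (fun y => ‖φ y‖ₑ ^ ((n : ℝ) / (n - 1))) x ^ r * u x ^ q := by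
    refine lintegral_congr_ae ?_
    filter_upwards [huv] with x hx
    rw [hx]
  set N := ∫⁻ x, (v x * ENNReal.ofReal ‖fderiv ℝ f (WithLp.toLp 2 x)‖) ^ p with hN
  have e2 : ∫⁻ x, (u x * ‖fderiv ℝ φ x‖ₑ) ^ p ≤ L ^ p * N := by
    rw [hN, ← lintegral_const_mul' _ _ (by finiteness)]
    refine lintegral_mono_ae ?_
    filter_upwards [huv] with x hx
    rw [hx, ← ENNReal.mul_rpow_of_nonneg _ _ hp0.le]
    refine ENNReal.rpow_le_rpow ?_ hp0.le
    calc v x * ‖fderiv ℝ φ x‖ₑ ≤ v x * (L * ENNReal.ofReal ‖fderiv ℝ f (WithLp.toLp 2 x)‖) :=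
          mul_le_mul_right (hfd f hf1 x) _
      _ = _ := by ring
  have e3 : max r (r / (r - 1)) * (1 / q) = θ * max 1 (pp / q) := by
    have h1 : r * (1 / q) = θ * 1 := by rw [hr]; field_simp
    have h2 : r / (r - 1) * (1 / q) = θ * (pp / q) := by
      have h3 : q = pp * (r - 1) := hE.qpp
      have h4 : r / (r - 1) = θ * pp := by
        rw [div_eq_iff hr1.ne', mul_assoc, ← h3, hr, mul_comm]
      rw [h4]; ring
    rw [max_mul_of_nonneg _ _ (by positivity), h1, h2, mul_max_of_nonneg _ _ hθ0.le]
  have e4 := hmain K u hu (hu.one_le hE) φ hφc hφs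
  calc _ ≤ (ENNReal.ofReal (4 ^ n) ^ r *
        (C * K ^ (max r (r / (r - 1))) * (L ^ p * N) ^ (q / p))) ^ (1 / q) := by
        rw [e1]
        refine ENNReal.rpow_le_rpow (mul_le_mul_right (e4.trans ?_) _) (by positivity)
        exact mul_le_mul_right (ENNReal.rpow_le_rpow e2 (by positivity)) _
    _ = C' * K ^ (θ * max 1 (pp / q)) * N ^ (1 / p) := by
        rw [show ENNReal.ofReal (4 ^ n) ^ r *
            (C * K ^ (max r (r / (r - 1))) * (L ^ p * N) ^ (q / p)) =
            (ENNReal.ofReal (4 ^ n) ^ r * C) * (K ^ (max r (r / (r - 1))) *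
              (L ^ p * N) ^ (q / p)) by ring,
          ENNReal.mul_rpow_of_nonneg (ENNReal.ofReal (4 ^ n) ^ r * C) _ (by positivity),
          ENNReal.mul_rpow_of_nonneg (K ^ (max r (r / (r - 1)))) _ (by positivity),
          ← ENNReal.rpow_mul K, e3,
          ← ENNReal.rpow_mul (L ^ p * N), show q / p * (1 / q) = 1 / p by field_simp,
          ENNReal.mul_rpow_of_nonneg (L ^ p) N (by positivity), ← ENNReal.rpow_mul L,
          mul_one_div_cancel hp0.ne', ENNReal.rpow_one, hC']
        ring
    _ ≤ _ := by
        refine mul_le_mul_left (mul_le_mul_left ?_ _) _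
        rw [ENNReal.le_ofReal_iff_toReal_le hC't (by positivity)]
        linarith
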